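/- arXiv:1612.02580 — 6 statements merged into one kernel-verified Lean document; each statement's English description precedes it below -/
import Mathlib

section
/- Weighted cycle-lemma identity for forests (Equation (zweit) in the proof of the superexponentiality lemma): For every weight sequence ω and all integers 1 ≤ k ≤ n, one has n·S_k(n) = k·Z(n−k, n), where S_k(n) denotes the sum of a(i₁)⋯a(i_k) over all k-tuples (i₁,…,i_k) of positive integers with i₁+⋯+i_k = n. -/
/-!
Read a tuple `(j₁, …, jₙ)` as a lattice walk whose `s`-th step is `j_s - 1`. Let `W ω n h` be the
total weight of the `n`-step walks that start at height `h` and reach `0` at time `n` and not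
earlier. Three facts give the identity.

* `W_one`: for `n ≥ 1`, `W ω n 1 = a ω n`. This is the definition of `a` seen through the first step
  decomposition of the walk (`W_eq_sum_tuple`).
* `W_add`: since a walk goes down by at most one at each step, a first passage from `h + h'` to `0`
  is a first passage from `h` to `0` followed by one from `h'` to `0`, so `W` is multiplicative
  under convolution in the number of steps. Hence `S ω k n = W ω n k` (`S_eq_W`).
* `hitting_time`: `n * W ω n k = k * Z ω (n - k) n`, the hitting time theorem. It follows by
  induction on `n` from the first step decomposition and the exchangeability relation
  `(n + 1) * ∑ p * ω p * Z ω q n = m * Z ω m (n + 1)` (sum over `p + q = m`), which is the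
  coefficientwise form of the rule for the derivative of `φ ^ (n + 1)`, where `φ = ∑ ω i * X ^ i`.
-/

open Finset
open scoped Classical

namespace EnrichedTrees

/-- `Z ω m n` is the sum of `ω k₁ ⋯ ω kₙ` over all `n`-tuples `(k₁, …, kₙ)` of
nonnegative integers with `k₁ + ⋯ + kₙ = m` (the partition function). -/
noncomputable def Z (ω : ℕ → ℝ) (m n : ℕ) : ℝ :=
  ∑ t ∈ Finset.Nat.antidiagonalTuple n m, ∏ i, ω (t i)

/-- `a ω n` (for `n ≥ 1`) is the sum of `ω j₁ ⋯ ω jₙ` over all `n`-tuples of nonnegative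
integers with `j₁ + ⋯ + jₙ = n - 1` and `j₁ + ⋯ + j_s ≥ s` for all `1 ≤ s ≤ n - 1`:
the total `ω`-weight of Łukasiewicz paths, i.e. of plane trees with `n` vertices.
By convention `a ω 0 = 0`. -/
noncomputable def a (ω : ℕ → ℝ) (n : ℕ) : ℝ :=
  if n = 0 then 0 else
    ∑ t ∈ (Finset.Nat.antidiagonalTuple n (n - 1)).filter
        (fun t => ∀ s ∈ Finset.Icc 1 (n - 1),
          s ≤ ∑ i ∈ Finset.univ.filter (fun i : Fin n => (i : ℕ) < s), t i),
      ∏ i, ω (t i)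

/-- `S ω k n` is the sum of `a i₁ ⋯ a i_k` over all `k`-tuples `(i₁, …, i_k)` of
positive integers with `i₁ + ⋯ + i_k = n` (the total weight of forests of `k` trees
with `n` vertices in total). -/
noncomputable def S (ω : ℕ → ℝ) (k n : ℕ) : ℝ :=
  ∑ t ∈ (Finset.Nat.antidiagonalTuple k n).filter (fun t => ∀ j, 0 < t j),
    ∏ j, a ω (t j)

/-- Splitting off the first entry in a sum over tuples of given total. -/
lemma sum_tuple_succ (k n : ℕ) (F : (Fin (k + 1) → ℕ) → ℝ) :
    ∑ t ∈ Finset.Nat.antidiagonalTuple (k + 1) n, F t =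
      ∑ x ∈ antidiagonal n, ∑ t ∈ Finset.Nat.antidiagonalTuple k x.2, F (Fin.cons x.1 t) := by
  rw [Finset.sum_sigma']
  symm
  refine Finset.sum_bij' (fun y _ => (Fin.cons y.1.1 y.2 : Fin (k + 1) → ℕ))
    (fun t _ => ⟨(t 0, ∑ i : Fin k, t i.succ), Fin.tail t⟩) ?_ ?_ ?_ ?_ ?_
  · rintro ⟨⟨p, q⟩, t⟩ h
    simp only [mem_sigma, HasAntidiagonal.mem_antidiagonal, Finset.Nat.mem_antidiagonalTuple] at h ⊢
    simp [Fin.sum_univ_succ, h.2, h.1]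
  · intro t h
    simp only [mem_sigma, HasAntidiagonal.mem_antidiagonal, Finset.Nat.mem_antidiagonalTuple] at h ⊢
    rw [Fin.sum_univ_succ] at h
    exact ⟨h, rfl⟩
  · rintro ⟨⟨p, q⟩, t⟩ h
    simp only [mem_sigma, HasAntidiagonal.mem_antidiagonal, Finset.Nat.mem_antidiagonalTuple] at h
    simp [h.2]
  · intro t h
    simp
  · intro y h
    rfl

/-! ### First passage weights -/

/-- First passage weights: `W ω n h` is the total weight of walks with `n` steps `j - 1`
(weighted by `ω j`) from height `h` that visit `0` at time `n` and not before. The first step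
is summed over `j ≤ n` only, as larger `j` leave too few steps to come back to `0`. -/
noncomputable def W (ω : ℕ → ℝ) : ℕ → ℕ → ℝ
  | 0, h => if h = 0 then 1 else 0
  | _ + 1, 0 => 0
  | n + 1, h + 1 => ∑ j ∈ range (n + 1), ω j * W ω n (h + j)

lemma W_eq_zero (ω : ℕ → ℝ) : ∀ n h : ℕ, n < h → W ω n h = 0
  | 0, h, hh => by simp [W, hh.ne']
  | n + 1, 0, hh => by omega
  | n + 1, h + 1, hh => by
      rw [W]
      refine Finset.sum_eq_zero fun j _ => ?_
      rw [W_eq_zero ω n (h + j) (by omega), mul_zero]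

/-- The first step decomposition, with the sum truncated at any sufficiently large bound. -/
lemma W_succ_of_le (ω : ℕ → ℝ) (n h N : ℕ) (hN : n < h + N) :
    W ω (n + 1) (h + 1) = ∑ j ∈ range N, ω j * W ω n (h + j) := by
  rw [W]
  have key : ∀ M, n < h + M → ∀ L, M ≤ L →
      ∑ j ∈ range M, ω j * W ω n (h + j) = ∑ j ∈ range L, ω j * W ω n (h + j) := by
    intro M hM L hL
    refine Finset.sum_subset (by simpa using hL) fun j _ hj => ?_
    rw [W_eq_zero ω n (h + j) (by simp at hj; omega), mul_zero]
  rcases le_total N (n + 1) with h1 | h1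
  · exact (key N hN _ h1).symm
  · exact key (n + 1) (by omega) _ h1

/-- A first passage from `h + h'` to `0` is cut at its first visit to `h'`, which it cannot
jump over because every step goes down by at most one. -/
lemma W_add (ω : ℕ → ℝ) (n : ℕ) : ∀ h h' : ℕ,
    W ω n (h + h') = ∑ x ∈ antidiagonal n, W ω x.1 h * W ω x.2 h' := by
  induction n with
  | zero =>
    intro h h'
    by_cases h0 : h = 0 <;> simp [W, h0]
  | succ n ih =>
    intro h h'
    cases h with
    | zero =>
      rw [Finset.Nat.antidiagonal_succ]
      simp [W]
    | succ h =>
      rw [Finset.Nat.antidiagonal_succ, show h + 1 + h' = (h + h') + 1 by omega, W]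
      simp only [sum_cons, sum_map, Function.Embedding.prodMap, Function.Embedding.coeFn_mk,
        Prod.map_fst, Prod.map_snd, Function.Embedding.refl_apply]
      have h1 : ∀ x ∈ antidiagonal n, W ω (x.1 + 1) (h + 1) * W ω x.2 h' =
          ∑ j ∈ range (n + 1), ω j * (W ω x.1 (h + j) * W ω x.2 h') := by
        intro x hx
        have := HasAntidiagonal.mem_antidiagonal.1 hx
        rw [W_succ_of_le ω x.1 h (n + 1) (by omega), Finset.sum_mul]
        exact Finset.sum_congr rfl fun j _ => by ring
      have h2 : W ω 0 (h + 1) = 0 := by simp [W]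
      simp only [Nat.succ_eq_add_one]
      rw [h2, zero_mul, zero_add, Finset.sum_congr rfl h1, Finset.sum_comm]
      refine Finset.sum_congr rfl fun j _ => ?_
      rw [← Finset.mul_sum, ← ih, show h + j + h' = h + h' + j by omega]

/-- `W ω n h` as an explicit sum over step sequences. Here `n - h` is the sum of the `j_s`
of a walk from `h` to `0`; the truncated case `n < h` is excluded by the filter. -/
lemma W_eq_sum_tuple (ω : ℕ → ℝ) (n : ℕ) : ∀ h : ℕ,
    W ω n h = ∑ t ∈ Finset.Nat.antidiagonalTuple n (n - h),
      if h ≤ n ∧ ∀ s < n, s < h + ∑ i ∈ univ.filter (fun i : Fin n => (i : ℕ) < s), t i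
      then ∏ i, ω (t i) else 0 := by
  induction n with
  | zero =>
    intro h
    by_cases h0 : h = 0 <;> simp [W, h0]
  | succ n ih =>
    intro h
    cases h with
    | zero =>
      rw [W]
      symm
      refine Finset.sum_eq_zero fun t _ => if_neg ?_
      rintro ⟨_, hs⟩
      simpa using hs 0 (by omega)
    | succ h =>
      rcases lt_or_ge n h with hn | hn
      · rw [W_eq_zero _ _ _ (by omega)]
        symm
        exact Finset.sum_eq_zero fun t _ => if_neg fun hc => by omega
      · rw [W_succ_of_le ω n h (n - h + 1) (by omega), sum_tuple_succ,
          Nat.add_sub_add_right,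
          Finset.Nat.sum_antidiagonal_eq_sum_range_succ_mk]
        refine Finset.sum_congr rfl fun j hj => ?_
        have hj' : j ≤ n - h := by simpa [Nat.lt_succ_iff] using hj
        rw [ih, Finset.mul_sum, Nat.sub_sub]
        refine Finset.sum_congr rfl fun t _ => ?_
        have hprod : ∏ i, ω ((Fin.cons j t : Fin (n + 1) → ℕ) i) = ω j * ∏ i, ω (t i) := by
          simp [Fin.prod_univ_succ]
        have hsum : ∀ s, ∑ i ∈ univ.filter (fun i : Fin (n + 1) => (i : ℕ) < s + 1),
            (Fin.cons j t : Fin (n + 1) → ℕ) i =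
            j + ∑ i ∈ univ.filter (fun i : Fin n => (i : ℕ) < s), t i := by
          intro s
          simp [Finset.sum_filter, Fin.sum_univ_succ]
        rw [hprod, mul_ite, mul_zero]
        refine if_congr ?_ rfl rfl
        constructor
        · rintro ⟨_, hs⟩
          refine ⟨by omega, fun s hsn => ?_⟩
          cases s with
          | zero => omega
          | succ s =>
            have := hs s (by omega)
            rw [hsum]
            omega
        · rintro ⟨_, hs⟩
          refine ⟨by omega, fun s hsn => ?_⟩
          have := hs (s + 1) (by omega)
          rw [hsum] at this
          omega

/-! ### Plane trees and forests as first passages -/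

lemma W_one (ω : ℕ → ℝ) (n : ℕ) : W ω n 1 = a ω n := by
  rw [a]
  split_ifs with hn
  · simp [hn, W]
  · rw [W_eq_sum_tuple, Finset.sum_filter]
    refine Finset.sum_congr rfl fun t _ => ?_
    have key : (1 ≤ n ∧ ∀ s < n, s < 1 + ∑ i ∈ univ.filter (fun i : Fin n => (i : ℕ) < s), t i) ↔
        ∀ s ∈ Finset.Icc 1 (n - 1), s ≤ ∑ i ∈ univ.filter (fun i : Fin n => (i : ℕ) < s), t i := by
      constructor
      · rintro ⟨_, hs⟩ s hs'
        rw [Finset.mem_Icc] at hs'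
        have := hs s (by omega)
        omega
      · intro hs
        refine ⟨by omega, fun s hsn => ?_⟩
        rcases Nat.eq_zero_or_pos s with h0 | h0
        · omega
        · have := hs s (Finset.mem_Icc.2 ⟨h0, by omega⟩)
          omega
    by_cases h : 1 ≤ n ∧ ∀ s < n, s < 1 + ∑ i ∈ univ.filter (fun i : Fin n => (i : ℕ) < s), t i
    · rw [if_pos h, if_pos (key.1 h)]
    · rw [if_neg h, if_neg (mt key.2 h)]

lemma S_eq_W (ω : ℕ → ℝ) (k : ℕ) : ∀ n, S ω k n = W ω n k := by
  -- Since `a ω 0 = 0`, tuples with a zero entry contribute nothing.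
  have hS : ∀ k n, S ω k n = ∑ t ∈ Finset.Nat.antidiagonalTuple k n, ∏ j, a ω (t j) := by
    intro k n
    rw [S]
    refine Finset.sum_filter_of_ne fun t _ ht j => ?_
    rw [Finset.prod_ne_zero_iff] at ht
    refine Nat.pos_of_ne_zero fun h0 => ht j (mem_univ j) ?_
    simp [a, h0]
  induction k with
  | zero =>
    intro n
    rw [hS]
    cases n <;> simp [W]
  | succ k ih =>
    intro n
    have hW : W ω n (k + 1) = W ω n (1 + k) := by rw [add_comm]
    rw [hS, sum_tuple_succ, hW, W_add]
    refine Finset.sum_congr rfl fun x _ => ?_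
    rw [W_one, ← ih, hS, Finset.mul_sum]
    exact Finset.sum_congr rfl fun t _ => by simp [Fin.prod_univ_succ]

/-! ### The partition function and the hitting time theorem -/

lemma Z_succ (ω : ℕ → ℝ) (m n : ℕ) :
    Z ω m (n + 1) = ∑ x ∈ antidiagonal m, ω x.1 * Z ω x.2 n := by
  rw [Z, sum_tuple_succ]
  refine Finset.sum_congr rfl fun x _ => ?_
  rw [Z, Finset.mul_sum]
  exact Finset.sum_congr rfl fun t _ => by simp [Fin.prod_univ_succ]

lemma Z_eq_coeff (ω : ℕ → ℝ) (n : ℕ) : ∀ m,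
    Z ω m n = PowerSeries.coeff m (PowerSeries.mk ω ^ n) := by
  induction n with
  | zero =>
    intro m
    cases m <;> simp [Z, PowerSeries.coeff_one]
  | succ n ih =>
    intro m
    rw [Z_succ, pow_succ', PowerSeries.coeff_mul]
    exact Finset.sum_congr rfl fun x _ => by rw [PowerSeries.coeff_mk, ih]

lemma coeff_X_mul_derivative (f : PowerSeries ℝ) (m : ℕ) :
    PowerSeries.coeff m (PowerSeries.X * PowerSeries.derivative ℝ f) =
      m * PowerSeries.coeff m f := by
  cases m with
  | zero => simp
  | succ m =>
    rw [PowerSeries.coeff_succ_X_mul, PowerSeries.coeff_derivative]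
    push_cast
    ring

/-- Exchangeability: under the weights of `Z ω m (n + 1)`, the first of the `n + 1` entries
has mean `m / (n + 1)`. -/
lemma Z_mean (ω : ℕ → ℝ) (m n : ℕ) :
    ((n : ℝ) + 1) * ∑ x ∈ antidiagonal m, (x.1 : ℝ) * ω x.1 * Z ω x.2 n =
      m * Z ω m (n + 1) := by
  have h1 : ∑ x ∈ antidiagonal m, (x.1 : ℝ) * ω x.1 * Z ω x.2 n =
      PowerSeries.coeff m ((PowerSeries.X * PowerSeries.derivative ℝ (PowerSeries.mk ω)) *
        PowerSeries.mk ω ^ n) := by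
    rw [PowerSeries.coeff_mul]
    refine Finset.sum_congr rfl fun x _ => ?_
    rw [coeff_X_mul_derivative, PowerSeries.coeff_mk, Z_eq_coeff]
  rw [h1, Z_eq_coeff, ← coeff_X_mul_derivative, PowerSeries.derivative_pow,
    ← PowerSeries.coeff_C_mul]
  congr 1
  simp only [map_add, map_natCast, map_one, Nat.cast_add, Nat.cast_one, Nat.add_sub_cancel]
  ring

/-- The hitting time theorem. -/
lemma hitting_time (ω : ℕ → ℝ) (n : ℕ) : ∀ k, k ≤ n →
    (n : ℝ) * W ω n k = (k : ℝ) * Z ω (n - k) n := by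
  induction n with
  | zero =>
    intro k hk
    obtain rfl : k = 0 := by omega
    simp
  | succ n ih =>
    intro k hk
    cases k with
    | zero => simp [W]
    | succ k =>
      have hkn : k ≤ n := by omega
      rcases Nat.eq_zero_or_pos n with hn | hn
      · subst hn
        obtain rfl : k = 0 := by omega
        rw [Z_succ]
        simp [W, Z]
      · have h1 : (n : ℝ) * W ω (n + 1) (k + 1) =
            k * Z ω (n - k) (n + 1) +
              ∑ x ∈ antidiagonal (n - k), (x.1 : ℝ) * ω x.1 * Z ω x.2 n := by
          rw [W_succ_of_le ω n k (n - k + 1) (by omega), Z_succ,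
            Finset.Nat.sum_antidiagonal_eq_sum_range_succ_mk,
            Finset.Nat.sum_antidiagonal_eq_sum_range_succ_mk, Finset.mul_sum, Finset.mul_sum,
            ← Finset.sum_add_distrib]
          refine Finset.sum_congr rfl fun j hj => ?_
          have hj' : j ≤ n - k := by simpa [Nat.lt_succ_iff] using hj
          have := ih (k + j) (by omega)
          rw [mul_left_comm, this, Nat.sub_sub]
          push_cast
          ring
        have h2 := Z_mean ω (n - k) n
        rw [Nat.cast_sub hkn] at h2
        have hn' : (n : ℝ) ≠ 0 := by positivity
        apply mul_left_cancel₀ hn'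
        rw [Nat.add_sub_add_right]
        push_cast
        linear_combination ((n : ℝ) + 1) * h1 + h2

/-- **Weighted cycle-lemma identity for forests**: for every weight sequence `ω` of
nonnegative reals and all `1 ≤ k ≤ n`, one has `n · S_k(n) = k · Z(n - k, n)`. -/
theorem weighted_cycle_identity_forests (ω : ℕ → ℝ) (hω : ∀ i, 0 ≤ ω i)
    (k n : ℕ) (hk : 1 ≤ k) (hkn : k ≤ n) :
    (n : ℝ) * S ω k n = (k : ℝ) * Z ω (n - k) n := by
  rw [S_eq_W]
  exact hitting_time ω n k hkn

end EnrichedTrees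
end

section
/- Normalized forest-weight limit in type III (Equation (quint) in the proof of the superexponentiality lemma): Suppose ω(0) > 0, ω(k) > 0 for some k ≥ 2, and ∑_k ω(k) t^k = ∞ for every real t > 0. Then for every integer k ≥ 2 and every ε > 0 there is N such that for all n ≥ N with n ≡ k (mod d): a(n−k+1) > 0 and |S_k(n)/(ω(0)^{k−1}·a(n−k+1)) − k| ≤ ε, where S_k(n) denotes the sum of a(i₁)⋯a(i_k) over all k-tuples (i₁,…,i_k) of positive integers with i₁+⋯+i_k = n. -/
/-!
Write `Z(m, n)` for the coefficient of `X ^ m` in `G ^ n`, where `G = ∑ ω(k) X ^ k`. First-passage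
decomposition identifies both `a(n)` and `S_k(n)` with first-passage weights of paths (`passage`),
and the cycle lemma (`mul_passage`) gives `S_k(n) = (k / n) Z(n - k, n)` and
`a(n) = Z(n - 1, n) / n`. With `m = n - k` the quotient in the theorem is therefore
`k · (m + 1) / (m + k) · Z(m, m + k) / (ω(0) ^ (k - 1) Z(m, m + 1))`, and it remains to see that
adding a box multiplies `Z(m, ·)` asymptotically by `ω(0)`.

Read `Z(m, n)` as the normalization of random allocations of `m` balls to `n ≥ m` boxes. Then
`ω(0) Z(m, n - 1) / Z(m, n)` is the expected proportion of empty boxes, so almost all boxes should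
be empty (`exists_nonempty_negligible`). Boxes with content above `K` have proportion at most
`1 / K`. For a fixed content `ℓ ≥ 1`, trade `L` boxes of content `ℓ` for `ℓ` boxes of content `L`
and `L - ℓ` empty boxes. Since the generating function has radius of convergence zero, `L` can be
chosen such that this exchange multiplies the weight by at least `η ^ (-L)` for any prescribed `η`
(`exists_cheap_switch`); this bounds the `L`-th factorial moment of the number of boxes of
content `ℓ` (`monomial_pow_mul_cle`), and hence its mean (`exists_fixed_value_negligible`).

For large `m` divisible by the span, `m` lies in the additive monoid generated by the support of
`ω`, which makes all the denominators positive (`exists_coeff_gf_pow_pos`).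
-/


open Finset
open scoped Classical

namespace EnrichedTrees

/-! ### First-passage weights and the convolution structure -/

/-- `passage ω n k` is the total `ω`-weight of the `n`-step paths `j₁, …, jₙ` along which
`k + j₁ + ⋯ + j_s - s` vanishes for the first time at `s = n`, defined by conditioning on the
first step. Values `j > n` are left out of the recursion since they contribute zero. -/
noncomputable def passage (ω : ℕ → ℝ) : ℕ → ℕ → ℝ
  | 0, 0 => 1
  | 0, _ + 1 => 0
  | _ + 1, 0 => 0
  | n + 1, k + 1 => ∑ j ∈ range (n + 1), ω j * passage ω n (k + j)

lemma passage_eq_zero (ω : ℕ → ℝ) : ∀ n k, n < k → passage ω n k = 0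
  | 0, 0, h => absurd h (lt_irrefl _)
  | 0, _ + 1, _ => rfl
  | _ + 1, 0, _ => rfl
  | n + 1, k + 1, h => by
    rw [passage]
    refine sum_eq_zero fun j _ => ?_
    rw [passage_eq_zero ω n (k + j) (by omega), mul_zero]

lemma passage_succ_succ (ω : ℕ → ℝ) (n k R : ℕ) (h : n + 1 ≤ R + k) :
    passage ω (n + 1) (k + 1) = ∑ j ∈ range R, ω j * passage ω n (k + j) := by
  have key : ∀ R, n + 1 ≤ R + k → ∀ R', R ≤ R' →
      ∑ j ∈ range R, ω j * passage ω n (k + j) = ∑ j ∈ range R', ω j * passage ω n (k + j) := by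
    intro R hR R' hRR'
    refine sum_subset (range_subset_range.2 hRR') fun j _ hj => ?_
    rw [mem_range, not_lt] at hj
    rw [passage_eq_zero ω n (k + j) (by omega), mul_zero]
  rw [passage]
  rcases le_total R (n + 1) with h' | h'
  · exact (key R h _ h').symm
  · exact key _ (by omega) _ h'

/-- A path started at height `k + l` splits at its first visit to height `l`. -/
lemma passage_add (ω : ℕ → ℝ) (l : ℕ) : ∀ n k,
    ∑ p ∈ antidiagonal n, passage ω p.1 k * passage ω p.2 l = passage ω n (k + l)
  | n, 0 => by
    rw [sum_eq_single (0, n)]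
    · simp [passage]
    · rintro ⟨i, j⟩ hp hne
      obtain _ | i := i
      · simp at hp; simp [hp] at hne
      · simp [passage]
    · simp
  | 0, k + 1 => by
    rw [show k + 1 + l = (k + l) + 1 by omega]
    simp [passage]
  | n + 1, k + 1 => by
    rw [Nat.sum_antidiagonal_succ, show k + 1 + l = (k + l) + 1 by omega,
      passage_succ_succ ω n (k + l) (n + 1) (by omega)]
    simp only [passage, zero_mul, zero_add]
    have : ∀ p ∈ antidiagonal n,
        (∑ j ∈ range (p.1 + 1), ω j * passage ω p.1 (k + j)) * passage ω p.2 l =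
        ∑ j ∈ range (n + 1), ω j * (passage ω p.1 (k + j) * passage ω p.2 l) := by
      intro p hp
      have hp' := HasAntidiagonal.mem_antidiagonal.1 hp
      have := passage_succ_succ ω p.1 k (n + 1) (by omega)
      rw [passage] at this
      rw [this, sum_mul]
      exact sum_congr rfl fun j _ => by ring
    rw [sum_congr rfl this, sum_comm]
    refine sum_congr rfl fun j _ => ?_
    rw [← mul_sum, passage_add ω l n (k + j)]
    congr 2; omega

lemma sum_antidiagonalTuple_succ (n M : ℕ) (f : (Fin (n + 1) → ℕ) → ℝ) :
    ∑ t ∈ Finset.Nat.antidiagonalTuple (n + 1) M, f t =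
      ∑ p ∈ antidiagonal M, ∑ u ∈ Finset.Nat.antidiagonalTuple n p.2,
        f (Fin.cons p.1 u : Fin (n + 1) → ℕ) := by
  rw [sum_sigma']
  refine sum_bij' (fun t _ => ⟨(t 0, ∑ i, Fin.tail t i), Fin.tail t⟩)
    (fun x _ => (Fin.cons x.1.1 x.2 : Fin (n + 1) → ℕ)) ?_ ?_ ?_ ?_ ?_
  · intro t ht
    rw [Finset.Nat.mem_antidiagonalTuple, Fin.sum_univ_succ] at ht
    simp [Finset.Nat.mem_antidiagonalTuple, Fin.tail, ht]
  · rintro ⟨⟨i, j⟩, u⟩ h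
    simp only [mem_sigma, HasAntidiagonal.mem_antidiagonal, Finset.Nat.mem_antidiagonalTuple] at h
    rw [Finset.Nat.mem_antidiagonalTuple, Fin.sum_univ_succ]
    simpa [h.2] using h.1
  · intro t _
    exact Fin.cons_self_tail t
  · rintro ⟨⟨i, j⟩, u⟩ h
    simp only [mem_sigma, HasAntidiagonal.mem_antidiagonal, Finset.Nat.mem_antidiagonalTuple] at h
    simp [h.2]
  · intro t _
    rw [Fin.cons_self_tail]

lemma sum_filter_cons (n j s : ℕ) (u : Fin n → ℕ) :
    ∑ i ∈ univ.filter (fun i : Fin (n + 1) => (i : ℕ) < s + 1),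
        (Fin.cons j u : Fin (n + 1) → ℕ) i =
      j + ∑ i ∈ univ.filter (fun i : Fin n => (i : ℕ) < s), u i := by
  rw [sum_filter, Fin.sum_univ_succ, sum_filter]
  simp

lemma sum_paths_eq_passage (ω : ℕ → ℝ) : ∀ n k M, M + k = n →
    (∑ t ∈ Finset.Nat.antidiagonalTuple n M,
      if ∀ s < n, s < k + ∑ i ∈ univ.filter (fun i : Fin n => (i : ℕ) < s), t i
        then ∏ i, ω (t i) else 0) = passage ω n k
  | 0, k, M, h => by
    obtain ⟨rfl, rfl⟩ : M = 0 ∧ k = 0 := by omega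
    simp [passage]
  | n + 1, 0, M, h => by
    rw [passage]
    refine sum_eq_zero fun t _ => if_neg fun H => ?_
    simpa using H 0 (by omega)
  | n + 1, k + 1, M, h => by
    rw [passage_succ_succ ω n k (M + 1) (by omega), sum_antidiagonalTuple_succ,
      Nat.sum_antidiagonal_eq_sum_range_succ_mk]
    refine sum_congr rfl fun j hj => ?_
    rw [mem_range] at hj
    rw [← sum_paths_eq_passage ω n (k + j) (M - j) (by omega), mul_sum]
    refine sum_congr rfl fun u _ => ?_
    rw [mul_ite, mul_zero, Fin.prod_univ_succ]
    simp only [Fin.cons_zero, Fin.cons_succ]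
    refine if_congr ⟨fun H s hs => ?_, fun H s hs => ?_⟩ rfl rfl
    · have := H (s + 1) (by omega)
      rw [sum_filter_cons] at this
      omega
    · obtain _ | s := s
      · omega
      · have := H s (by omega)
        rw [sum_filter_cons]
        omega

lemma a_eq_passage (ω : ℕ → ℝ) (n : ℕ) : a ω n = passage ω n 1 := by
  obtain _ | n := n
  · simp [a, passage]
  · rw [← sum_paths_eq_passage ω (n + 1) 1 n rfl, a, if_neg (by omega), sum_filter]
    refine sum_congr rfl fun t _ => ?_
    have hiff : (∀ s ∈ Icc 1 (n + 1 - 1),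
          s ≤ ∑ i ∈ univ.filter (fun i : Fin (n + 1) => (i : ℕ) < s), t i) ↔
        ∀ s < n + 1, s < 1 + ∑ i ∈ univ.filter (fun i : Fin (n + 1) => (i : ℕ) < s), t i := by
      refine ⟨fun H s hs => ?_, fun H s hs => ?_⟩
      · obtain _ | s := s
        · omega
        · have := H (s + 1) (by simp; omega)
          omega
      · have := H s (by simp at hs; omega)
        omega
    by_cases h : ∀ s < n + 1,
        s < 1 + ∑ i ∈ univ.filter (fun i : Fin (n + 1) => (i : ℕ) < s), t i
    · rw [if_pos h, if_pos (hiff.2 h)]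
    · rw [if_neg h, if_neg (mt hiff.1 h)]

lemma S_eq_passage (ω : ℕ → ℝ) (k n : ℕ) : S ω k n = passage ω n k := by
  have hS : ∀ k n, S ω k n = ∑ t ∈ Finset.Nat.antidiagonalTuple k n, ∏ j, a ω (t j) := by
    intro k n
    rw [S, sum_filter]
    refine sum_congr rfl fun t _ => ?_
    split_ifs with h
    · rfl
    · push Not at h
      obtain ⟨j, hj⟩ := h
      refine (prod_eq_zero (mem_univ j) ?_).symm
      simp [a, Nat.le_zero.1 hj]
  induction k generalizing n with
  | zero =>
    rw [hS]
    obtain _ | n := n <;> simp [passage]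
  | succ k ih =>
    have hadd := passage_add ω k n 1
    rw [add_comm 1 k] at hadd
    rw [hS, sum_antidiagonalTuple_succ, ← hadd]
    refine sum_congr rfl fun p _ => ?_
    rw [← ih, hS, mul_sum, ← a_eq_passage]
    simp [Fin.prod_univ_succ]

/-! ### The partition functions `Z(m, n)` as coefficients of `G ^ n` -/

/-- The generating function `∑ ω(k) X ^ k`; the partition function `Z(m, n)` is
`coeff m (gf ω ^ n)`. -/
noncomputable def gf (ω : ℕ → ℝ) : PowerSeries ℝ := PowerSeries.mk ω

/-- Exchangeability: each of `n + 1` boxes carries the same expected share `M / (n + 1)` of the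
total content `M`. Obtained from the derivative of `G ^ (n + 1)`. -/
lemma sum_mul_coeff_gf_pow (ω : ℕ → ℝ) (n M : ℕ) :
    ((n : ℝ) + 1) * ∑ p ∈ antidiagonal M,
      (p.1 : ℝ) * ω p.1 * PowerSeries.coeff p.2 (gf ω ^ n) =
      M * PowerSeries.coeff M (gf ω ^ (n + 1)) := by
  obtain _ | M := M
  · simp
  · rw [Nat.sum_antidiagonal_succ]
    have h1 := PowerSeries.coeff_derivative (gf ω ^ (n + 1)) M
    rw [Derivation.leibniz_pow, Nat.add_sub_cancel, smul_eq_mul, mul_comm (gf ω ^ n),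
      map_nsmul, PowerSeries.coeff_mul] at h1
    push_cast
    rw [mul_comm ((M : ℝ) + 1), ← h1, nsmul_eq_mul]
    simp [PowerSeries.coeff_derivative, gf, mul_comm]

/-- The cycle lemma (Kemperman's formula): among all `n`-step paths from height `k` to height
`0`, a proportion `k / n` by weight are first-passage paths. -/
lemma mul_passage (ω : ℕ → ℝ) : ∀ n k M : ℕ, M + k = n →
    (n : ℝ) * passage ω n k = k * PowerSeries.coeff M (gf ω ^ n)
  | 0, k, M, h => by
    obtain ⟨rfl, rfl⟩ : M = 0 ∧ k = 0 := by omega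
    simp
  | n + 1, 0, M, h => by simp [passage]
  | n + 1, k + 1, M, h => by
    obtain _ | n := n
    · obtain ⟨rfl, rfl⟩ : M = 0 ∧ k = 0 := by omega
      simp [passage, gf]
    have hn : (0 : ℝ) < (n + 1 : ℕ) := by positivity
    have hM : (M : ℝ) + k = (n + 1 : ℕ) := by exact_mod_cast (by omega : M + k = n + 1)
    have hmul : PowerSeries.coeff M (gf ω ^ (n + 1 + 1)) =
        ∑ p ∈ antidiagonal M, ω p.1 * PowerSeries.coeff p.2 (gf ω ^ (n + 1)) := by
      rw [pow_succ', PowerSeries.coeff_mul]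
      simp [gf]
    have hrec : ((n + 1 : ℕ) : ℝ) * passage ω (n + 1 + 1) (k + 1) =
        k * PowerSeries.coeff M (gf ω ^ (n + 1 + 1)) + ∑ p ∈ antidiagonal M,
          (p.1 : ℝ) * ω p.1 * PowerSeries.coeff p.2 (gf ω ^ (n + 1)) := by
      rw [passage_succ_succ ω (n + 1) k (M + 1) (by omega), hmul, mul_sum, mul_sum,
        ← sum_add_distrib,
        Nat.sum_antidiagonal_eq_sum_range_succ_mk]
      refine sum_congr rfl fun j hj => ?_
      rw [mem_range] at hj
      have := mul_passage ω (n + 1) (k + j) (M - j) (by omega)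
      rw [mul_left_comm, this]
      push_cast
      ring
    have hex := sum_mul_coeff_gf_pow ω (n + 1) M
    refine mul_left_cancel₀ hn.ne' ?_
    rw [mul_left_comm, hrec]
    push_cast at hex hM ⊢
    have e : (M : ℝ) = n + 1 - k := by linarith
    rw [e] at hex
    linear_combination hex

/-! ### The coefficientwise order -/

/-- Coefficientwise comparison of real power series. -/
def CLe (A B : PowerSeries ℝ) : Prop := ∀ m, PowerSeries.coeff m A ≤ PowerSeries.coeff m B

lemma CLe.mul {A B C D : PowerSeries ℝ} (hA : CLe 0 A) (hC : CLe 0 C) (h : CLe A B)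
    (h' : CLe C D) : CLe (A * C) (B * D) := by
  intro m
  rw [PowerSeries.coeff_mul, PowerSeries.coeff_mul]
  refine sum_le_sum fun p _ => mul_le_mul (h _) (h' _) (by simpa using hC p.2) ?_
  exact le_trans (by simpa using hA p.1) (h p.1)

lemma CLe.refl (A : PowerSeries ℝ) : CLe A A := fun _ => le_rfl

lemma CLe.mul_nonneg {A B : PowerSeries ℝ} (hA : CLe 0 A) (hB : CLe 0 B) : CLe 0 (A * B) := by
  have := CLe.mul (CLe.refl 0) (CLe.refl 0) hA hB
  rwa [mul_zero] at this

lemma CLe.pow_nonneg {A : PowerSeries ℝ} (hA : CLe 0 A) : ∀ n, CLe 0 (A ^ n)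
  | 0 => fun m => by
    rw [pow_zero, PowerSeries.coeff_one]
    split_ifs <;> simp
  | n + 1 => by
    rw [pow_succ]
    exact CLe.mul_nonneg (CLe.pow_nonneg hA n) hA

lemma CLe.pow {A B : PowerSeries ℝ} (hA : CLe 0 A) (h : CLe A B) : ∀ n, CLe (A ^ n) (B ^ n)
  | 0 => by
    rw [pow_zero, pow_zero]
    exact CLe.refl 1
  | n + 1 => by
    rw [pow_succ, pow_succ]
    exact CLe.mul (CLe.pow_nonneg hA n) hA (CLe.pow hA h n) h

lemma zero_cle_gf {ω : ℕ → ℝ} (hω : ∀ i, 0 ≤ ω i) : CLe 0 (gf ω) := fun m => by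
  simpa [gf] using hω m

lemma zero_cle_monomial (j : ℕ) {r : ℝ} (hr : 0 ≤ r) : CLe 0 (PowerSeries.monomial j r) :=
  fun m => by
    rw [PowerSeries.coeff_monomial]
    split_ifs <;> simp [hr]

lemma monomial_cle_gf {ω : ℕ → ℝ} (hω : ∀ i, 0 ≤ ω i) (j : ℕ) :
    CLe (PowerSeries.monomial j (ω j)) (gf ω) := fun m => by
  rw [PowerSeries.coeff_monomial, gf, PowerSeries.coeff_mk]
  split_ifs with h
  · rw [h]
  · exact hω m

lemma monomial_pow' (j n : ℕ) (r : ℝ) :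
    (PowerSeries.monomial j r) ^ n = PowerSeries.monomial (n * j) (r ^ n) := by
  induction n with
  | zero => simp
  | succ n ih => rw [pow_succ, ih, PowerSeries.monomial_mul_monomial, pow_succ, Nat.succ_mul]

/-! ### Fixed positive values become negligible -/

/-- Type III in usable form: for a suitable `L`, the weight of `L` boxes of content `ℓ` is at most
`η ^ L` times the weight of `ℓ` boxes of content `L` together with `L - ℓ` empty ones. Otherwise `ω` would grow at most geometrically. -/
lemma exists_cheap_switch {ω : ℕ → ℝ} (hω : ∀ i, 0 ≤ ω i) (h0 : 0 < ω 0)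
    (hIII : ∀ t : ℝ, 0 < t → ¬ Summable (fun i => ω i * t ^ i))
    {ℓ : ℕ} (hℓ : 1 ≤ ℓ) {η : ℝ} (hη : 0 < η) :
    ∃ L, ℓ ≤ L ∧ ω ℓ ^ L ≤ η ^ L * (ω L ^ ℓ * ω 0 ^ (L - ℓ)) := by
  by_contra! H
  set r : ℝ := max 1 (ω ℓ / (η * ω 0)) with hr
  have hr1 : 1 ≤ r := le_max_left _ _
  have hr0 : 0 < r := by linarith
  have hrω : ω ℓ ≤ r * (η * ω 0) := (div_le_iff₀ (by positivity)).1 (le_max_right _ _)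
  have hgrow : ∀ L, ℓ ≤ L → ω L ≤ r ^ L * ω 0 := by
    intro L hL
    have h1 : η ^ L * (ω L ^ ℓ * ω 0 ^ (L - ℓ)) ≤ (r * (η * ω 0)) ^ L :=
      (H L hL).le.trans (pow_le_pow_left₀ (hω ℓ) hrω L)
    have h2 : (r * (η * ω 0)) ^ L = η ^ L * (r ^ L * ω 0 ^ ℓ * ω 0 ^ (L - ℓ)) := by
      rw [mul_assoc (r ^ L), ← pow_add, Nat.add_sub_cancel' hL, mul_pow, mul_pow]
      ring
    rw [h2] at h1
    have h3 : ω L ^ ℓ ≤ r ^ L * ω 0 ^ ℓ :=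
      le_of_mul_le_mul_right (le_of_mul_le_mul_left h1 (by positivity)) (by positivity)
    have h4 : r ^ L ≤ (r ^ L) ^ ℓ := le_self_pow₀ (one_le_pow₀ hr1) (by omega)
    refine (pow_le_pow_iff_left₀ (hω L) (by positivity) (by omega : ℓ ≠ 0)).1 ?_
    rw [mul_pow]
    exact h3.trans (mul_le_mul_of_nonneg_right h4 (by positivity))
  refine hIII (1 / (2 * r)) (by positivity) ?_
  refine Summable.of_norm_bounded_eventually_nat
    (summable_geometric_two.mul_left (ω 0)) ?_
  filter_upwards [Filter.eventually_ge_atTop ℓ] with L hL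
  rw [Real.norm_of_nonneg (mul_nonneg (hω L) (by positivity))]
  calc ω L * (1 / (2 * r)) ^ L ≤ r ^ L * ω 0 * (1 / (2 * r)) ^ L :=
        mul_le_mul_of_nonneg_right (hgrow L hL) (by positivity)
    _ = ω 0 * (r * (1 / (2 * r))) ^ L := by rw [mul_pow]; ring
    _ = ω 0 * (1 / 2) ^ L := by
        congr 2
        field_simp

/-- The `L`-th factorial moment of the number of boxes with content `ℓ` is small, by the
switching of `exists_cheap_switch`. -/
lemma monomial_pow_mul_cle {ω : ℕ → ℝ} (hω : ∀ i, 0 ≤ ω i)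
    {ℓ L : ℕ} (hL : ℓ ≤ L) {η : ℝ} (hη : 0 < η)
    (h : ω ℓ ^ L ≤ η ^ L * (ω L ^ ℓ * ω 0 ^ (L - ℓ))) {n : ℕ} (hn : L ≤ n) (m : ℕ) :
    PowerSeries.coeff m (PowerSeries.monomial ℓ (ω ℓ) ^ L * gf ω ^ (n - L)) ≤
      η ^ L * PowerSeries.coeff m (gf ω ^ n) := by
  have hG := CLe.pow_nonneg (zero_cle_gf hω) (n - L)
  have hmono : CLe (PowerSeries.monomial L (ω L) ^ ℓ * PowerSeries.monomial 0 (ω 0) ^ (L - ℓ))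
      (gf ω ^ L) := by
    have := CLe.mul (CLe.pow_nonneg (zero_cle_monomial L (hω L)) ℓ)
      (CLe.pow_nonneg (zero_cle_monomial 0 (hω 0)) (L - ℓ))
      (CLe.pow (zero_cle_monomial L (hω L)) (monomial_cle_gf hω L) ℓ)
      (CLe.pow (zero_cle_monomial 0 (hω 0)) (monomial_cle_gf hω 0) (L - ℓ))
    rwa [← pow_add (gf ω), Nat.add_sub_cancel' hL] at this
  have h1 : CLe (PowerSeries.monomial ℓ (ω ℓ) ^ L) (PowerSeries.C (η ^ L) * gf ω ^ L) := by
    intro i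
    have := hmono i
    rw [monomial_pow', monomial_pow', PowerSeries.monomial_mul_monomial,
      PowerSeries.coeff_monomial] at this
    rw [monomial_pow', PowerSeries.coeff_monomial, PowerSeries.coeff_C_mul]
    split_ifs with hi
    · rw [if_pos (by rw [hi]; ring)] at this
      exact h.trans (mul_le_mul_of_nonneg_left this (by positivity))
    · exact mul_nonneg (by positivity) (by simpa using CLe.pow_nonneg (zero_cle_gf hω) L i)
  have h2 := CLe.mul (CLe.pow_nonneg (zero_cle_monomial ℓ (hω ℓ)) L) hG h1 (CLe.refl _) m
  rwa [mul_assoc, ← pow_add, Nat.add_sub_cancel' hn, PowerSeries.coeff_C_mul] at h2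

lemma pow_mul_add_pow (y H : PowerSeries ℝ) {L n : ℕ} (hL : L ≤ n) :
    y ^ L * (y + H) ^ (n - L) = ∑ j ∈ range (n + 1),
      PowerSeries.C ((if L ≤ j then (n - L).choose (j - L) else 0 : ℕ) : ℝ) *
        (y ^ j * H ^ (n - j)) := by
  obtain ⟨r, rfl⟩ := Nat.exists_eq_add_of_le hL
  rw [add_assoc, sum_range_add, sum_eq_zero, zero_add, add_pow, Nat.add_sub_cancel_left, mul_sum]
  · refine sum_congr rfl fun j _ => ?_
    rw [if_pos (Nat.le_add_right _ _), Nat.add_sub_cancel_left, Nat.add_sub_add_left]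
    simp only [map_natCast, pow_add]
    ring
  · intro j hj
    rw [if_neg (by simpa using hj)]
    simp

/-- Pointwise form of the moment bound: if `N` of `n` boxes have content `ℓ`, then
`N / n ≤ δ + (2 / δ) ^ L * (N choose L) / (n choose L)`; here multiplied by `n choose N`. -/
lemma choose_bound {δ : ℝ} (hδ : 0 < δ) {L n j : ℕ} (hL : 1 ≤ L) (hn : 2 * (L : ℝ) ≤ δ * n)
    (hj : j ≤ n) :
    ((if 1 ≤ j then (n - 1).choose (j - 1) else 0 : ℕ) : ℝ) ≤
      δ * n.choose j +
        (2 / δ) ^ L * ((if L ≤ j then (n - L).choose (j - L) else 0 : ℕ) : ℝ) := by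
  have hL' : (1 : ℝ) ≤ L := by exact_mod_cast hL
  have hn0 : (0 : ℝ) < n := by
    by_contra hcon
    nlinarith
  obtain _ | j := j
  · rw [if_neg (by omega : ¬ 1 ≤ 0)]
    have : (0 : ℝ) ≤ ((if L ≤ 0 then (n - L).choose (0 - L) else 0 : ℕ) : ℝ) := Nat.cast_nonneg _
    push_cast at this ⊢
    positivity
  obtain _ | n := n
  · simp at hn0
  have hid : ((n : ℝ) + 1) * n.choose j = (n + 1).choose (j + 1) * ((j : ℝ) + 1) := by
    exact_mod_cast Nat.add_one_mul_choose_eq n j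
  rw [if_pos (by omega), Nat.add_sub_cancel, Nat.add_sub_cancel]
  have hc0 : (0 : ℝ) ≤ (n + 1).choose (j + 1) := Nat.cast_nonneg _
  push_cast at hn hn0
  rcases le_or_gt ((j : ℝ) + 1) (δ * (n + 1)) with h | h
  · have h1 : (n.choose j : ℝ) ≤ δ * (n + 1).choose (j + 1) := by
      refine le_of_mul_le_mul_left ?_ hn0
      nlinarith
    have h2 : (0 : ℝ) ≤ (2 / δ) ^ L *
        ((if L ≤ j + 1 then (n + 1 - L).choose (j + 1 - L) else 0 : ℕ) : ℝ) := by positivity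
    linarith
  · have hLj : L ≤ j + 1 := by
      have : (L : ℝ) ≤ j + 1 := by linarith
      exact_mod_cast this
    rw [if_pos hLj]
    have h1 : (n.choose j : ℝ) ≤ (n + 1).choose (j + 1) := by
      exact_mod_cast (by rw [Nat.choose_succ_succ]; omega :
        n.choose j ≤ (n + 1).choose (j + 1))
    have hmul : ((n + 1).choose (j + 1) : ℝ) * (j + 1).choose L =
        (n + 1).choose L * (n + 1 - L).choose (j + 1 - L) := by
      exact_mod_cast Nat.choose_mul hLj
    have hup : (L.factorial : ℝ) * (n + 1).choose L ≤ ((n : ℝ) + 1) ^ L := by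
      have := Nat.descFactorial_le_pow (n + 1) L
      rw [Nat.descFactorial_eq_factorial_mul_choose] at this
      exact_mod_cast this
    have hlow : (δ * (n + 1) / 2) ^ L ≤ (L.factorial : ℝ) * (j + 1).choose L := by
      have h3 := Nat.pow_sub_le_descFactorial (j + 1) L
      rw [Nat.descFactorial_eq_factorial_mul_choose] at h3
      have h4 : (((j + 1 + 1 - L : ℕ) : ℝ)) ^ L ≤ (L.factorial : ℝ) * (j + 1).choose L := by
        exact_mod_cast h3
      refine le_trans (pow_le_pow_left₀ (by positivity) ?_ L) h4
      rw [Nat.cast_sub (by omega)]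
      push_cast
      linarith
    set c : ℝ := (((n + 1 - L).choose (j + 1 - L) : ℕ) : ℝ) with hc
    have hcc : 0 ≤ c := Nat.cast_nonneg _
    have h5 : ((n + 1).choose (j + 1) : ℝ) * (δ * (n + 1) / 2) ^ L ≤ ((n : ℝ) + 1) ^ L * c := by
      calc _ ≤ ((n + 1).choose (j + 1) : ℝ) * ((L.factorial : ℝ) * (j + 1).choose L) :=
            mul_le_mul_of_nonneg_left hlow hc0
        _ = ((L.factorial : ℝ) * (n + 1).choose L) * c := by
            linear_combination (L.factorial : ℝ) * hmul
        _ ≤ _ := mul_le_mul_of_nonneg_right hup hcc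
    have h6 : ((n + 1).choose (j + 1) : ℝ) ≤ (2 / δ) ^ L * c := by
      have hpos : 0 < (δ * ((n : ℝ) + 1) / 2) ^ L := by positivity
      refine le_of_mul_le_mul_right (h5.trans (le_of_eq ?_)) hpos
      rw [mul_right_comm, ← mul_pow]
      congr 2
      field_simp
    have : 0 ≤ δ * ((n + 1).choose (j + 1) : ℝ) := by positivity
    linarith

/-- The expected proportion of boxes with a given content `ℓ ≥ 1` tends to zero, uniformly in
the total content `m`. -/
lemma exists_fixed_value_negligible {ω : ℕ → ℝ} (hω : ∀ i, 0 ≤ ω i) (h0 : 0 < ω 0)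
    (hIII : ∀ t : ℝ, 0 < t → ¬ Summable (fun i => ω i * t ^ i))
    {ℓ : ℕ} (hℓ : 1 ≤ ℓ) {ε : ℝ} (hε : 0 < ε) :
    ∃ N, ∀ n, N ≤ n → ∀ m,
      PowerSeries.coeff m (PowerSeries.monomial ℓ (ω ℓ) * gf ω ^ n) ≤
        ε * PowerSeries.coeff m (gf ω ^ (n + 1)) := by
  set δ : ℝ := min (ε / 2) 1 with hδdef
  have hδ : 0 < δ := lt_min (by linarith) one_pos
  -- With this `η` the prefactor `(2 / δ) ^ L * η ^ L` collapses to `δ ^ L`.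
  set η : ℝ := δ * δ / 2 with hηdef
  have hη : 0 < η := by positivity
  obtain ⟨L, hL, hsw⟩ := exists_cheap_switch hω h0 hIII hℓ hη
  obtain ⟨N, hN⟩ := exists_nat_ge (2 * (L : ℝ) / δ)
  refine ⟨max N L, fun n hn m => ?_⟩
  have hn1 : 2 * (L : ℝ) ≤ δ * (n + 1 : ℕ) := by
    have h1 : 2 * (L : ℝ) ≤ N * δ := (div_le_iff₀ hδ).1 hN
    have h2 : (N : ℝ) ≤ n := by exact_mod_cast (le_max_left _ _).trans hn
    push_cast
    nlinarith
  have hLn : L ≤ n + 1 := by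
    have := (le_max_right N L).trans hn
    omega
  set y := PowerSeries.monomial ℓ (ω ℓ) with hy
  set H := gf ω - y with hH
  have hyH : gf ω = y + H := by rw [hH]; ring
  have hy0 : CLe 0 y := zero_cle_monomial ℓ (hω ℓ)
  have hH0 : CLe 0 H := fun i => by
    rw [hH, map_sub, map_zero, sub_nonneg]
    exact monomial_cle_gf hω ℓ i
  have hterm : ∀ j, 0 ≤ PowerSeries.coeff m (y ^ j * H ^ (n + 1 - j)) := fun j => by
    simpa using CLe.mul_nonneg (CLe.pow_nonneg hy0 j) (CLe.pow_nonneg hH0 (n + 1 - j)) m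
  have hexp : ∀ L', L' ≤ n + 1 → PowerSeries.coeff m (y ^ L' * gf ω ^ (n + 1 - L')) =
      ∑ j ∈ range (n + 1 + 1),
        ((if L' ≤ j then (n + 1 - L').choose (j - L') else 0 : ℕ) : ℝ) *
          PowerSeries.coeff m (y ^ j * H ^ (n + 1 - j)) := by
    intro L' hL'
    rw [hyH, pow_mul_add_pow y H hL', map_sum]
    exact sum_congr rfl fun j _ => PowerSeries.coeff_C_mul _ _ _
  have e1 := hexp 1 (by omega)
  have e0 := hexp 0 (by omega)
  have eL := hexp L hLn
  rw [pow_one, Nat.add_sub_cancel] at e1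
  simp only [pow_zero, one_mul, Nat.sub_zero, Nat.zero_le, if_true] at e0
  have hmom := monomial_pow_mul_cle hω hL hη hsw hLn m
  rw [← hy] at hmom
  have hG0 : 0 ≤ PowerSeries.coeff m (gf ω ^ (n + 1)) := by
    simpa using CLe.pow_nonneg (zero_cle_gf hω) (n + 1) m
  have hmain : PowerSeries.coeff m (y * gf ω ^ n) ≤
      δ * PowerSeries.coeff m (gf ω ^ (n + 1)) +
        (2 / δ) ^ L * PowerSeries.coeff m (y ^ L * gf ω ^ (n + 1 - L)) := by
    rw [e1, e0, eL, mul_sum, mul_sum, ← sum_add_distrib]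
    refine sum_le_sum fun j hj => ?_
    have := mul_le_mul_of_nonneg_right
      (choose_bound hδ (hℓ.trans hL) hn1 (by rw [mem_range] at hj; omega : j ≤ n + 1)) (hterm j)
    refine this.trans (le_of_eq ?_)
    ring
  have hpow : (2 / δ) ^ L * η ^ L ≤ δ := by
    rw [← mul_pow, show 2 / δ * η = δ by rw [hηdef]; field_simp]
    exact pow_le_of_le_one hδ.le (min_le_right _ _) (by omega)
  have h2δ : δ + δ ≤ ε := by
    have : δ ≤ ε / 2 := min_le_left _ _
    linarith
  calc _ ≤ δ * PowerSeries.coeff m (gf ω ^ (n + 1)) +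
        (2 / δ) ^ L * (η ^ L * PowerSeries.coeff m (gf ω ^ (n + 1))) :=
        hmain.trans (by gcongr)
    _ = (δ + (2 / δ) ^ L * η ^ L) * PowerSeries.coeff m (gf ω ^ (n + 1)) := by ring
    _ ≤ ε * PowerSeries.coeff m (gf ω ^ (n + 1)) := by
        gcongr
        linarith

/-! ### Almost all boxes are empty -/

/-- For `m ≤ n + 1` the expected proportion of non-empty boxes among `n + 1` tends to zero:
contents above `K` account for a proportion at most `1 / K`, and each content in `[1, K]` is
negligible. -/
lemma exists_nonempty_negligible {ω : ℕ → ℝ} (hω : ∀ i, 0 ≤ ω i) (h0 : 0 < ω 0)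
    (hIII : ∀ t : ℝ, 0 < t → ¬ Summable (fun i => ω i * t ^ i)) {ε : ℝ} (hε : 0 < ε) :
    ∃ N, ∀ n, N ≤ n → ∀ m, m ≤ n + 1 →
      (1 - ε) * PowerSeries.coeff m (gf ω ^ (n + 1)) ≤ ω 0 * PowerSeries.coeff m (gf ω ^ n) := by
  obtain ⟨K, hK⟩ := exists_nat_gt (2 / ε)
  have hK0 : (0 : ℝ) < K := lt_trans (by positivity) hK
  have hfix : ∀ ℓ, ∃ N, 1 ≤ ℓ → ∀ n, N ≤ n → ∀ m,
      PowerSeries.coeff m (PowerSeries.monomial ℓ (ω ℓ) * gf ω ^ n) ≤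
        (ε / (2 * K)) * PowerSeries.coeff m (gf ω ^ (n + 1)) := by
    intro ℓ
    by_cases hℓ : 1 ≤ ℓ
    · obtain ⟨N, hN⟩ := exists_fixed_value_negligible hω h0 hIII hℓ
        (show 0 < ε / (2 * K) by positivity)
      exact ⟨N, fun _ => hN⟩
    · exact ⟨0, fun h => absurd h hℓ⟩
  choose N hN using hfix
  refine ⟨(Icc 1 K).sup N, fun n hn m hm => ?_⟩
  have hG0 : 0 ≤ PowerSeries.coeff m (gf ω ^ (n + 1)) := by
    simpa using CLe.pow_nonneg (zero_cle_gf hω) (n + 1) m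
  set θ : PowerSeries ℝ := PowerSeries.mk fun j => (j : ℝ) * ω j with hθ
  have hsplit : CLe (gf ω) (PowerSeries.monomial 0 (ω 0) +
      ∑ ℓ ∈ Icc 1 K, PowerSeries.monomial ℓ (ω ℓ) + PowerSeries.C (1 / (K : ℝ)) * θ) := by
    intro j
    have hj := hω j
    simp only [gf, hθ, map_add, map_sum, PowerSeries.coeff_mk, PowerSeries.coeff_monomial,
      PowerSeries.coeff_C_mul, sum_ite_eq, mem_Icc]
    have htail : 0 ≤ 1 / (K : ℝ) * (j * ω j) := by positivity
    by_cases hj0 : j = 0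
    · subst hj0
      simp
    by_cases hjK : j ≤ K
    · rw [if_neg hj0, if_pos ⟨by omega, hjK⟩]
      linarith
    · rw [if_neg hj0, if_neg (by omega)]
      have h1 : (K : ℝ) ≤ j := by exact_mod_cast (by omega : K ≤ j)
      have h2 : 1 ≤ 1 / (K : ℝ) * j := by
        rw [one_div, inv_mul_eq_div]
        exact (one_le_div hK0).2 h1
      nlinarith
  have hmul := CLe.mul (zero_cle_gf hω) (CLe.pow_nonneg (zero_cle_gf hω) n) hsplit (CLe.refl _) m
  rw [← pow_succ', add_mul, add_mul, map_add, map_add, sum_mul, map_sum,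
    PowerSeries.monomial_zero_eq_C_apply, PowerSeries.coeff_C_mul, mul_assoc,
    PowerSeries.coeff_C_mul] at hmul
  have hmid : ∑ ℓ ∈ Icc 1 K, PowerSeries.coeff m (PowerSeries.monomial ℓ (ω ℓ) * gf ω ^ n) ≤
      ε / 2 * PowerSeries.coeff m (gf ω ^ (n + 1)) := by
    refine (sum_le_card_nsmul _ _ _ fun ℓ hℓ =>
      hN ℓ (mem_Icc.1 hℓ).1 n ((le_sup hℓ).trans hn) m).trans (le_of_eq ?_)
    rw [Nat.card_Icc, Nat.add_sub_cancel, nsmul_eq_mul]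
    field_simp
  have htail : 1 / (K : ℝ) * PowerSeries.coeff m (θ * gf ω ^ n) ≤
      ε / 2 * PowerSeries.coeff m (gf ω ^ (n + 1)) := by
    have hex := sum_mul_coeff_gf_pow ω n m
    have hco : PowerSeries.coeff m (θ * gf ω ^ n) = ∑ p ∈ antidiagonal m,
        (p.1 : ℝ) * ω p.1 * PowerSeries.coeff p.2 (gf ω ^ n) := by
      rw [PowerSeries.coeff_mul]
      simp [hθ]
    rw [← hco] at hex
    have hm' : (m : ℝ) ≤ n + 1 := by exact_mod_cast hm
    have h1 : PowerSeries.coeff m (θ * gf ω ^ n) ≤ PowerSeries.coeff m (gf ω ^ (n + 1)) := by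
      refine le_of_mul_le_mul_left ?_ (by positivity : (0 : ℝ) < n + 1)
      rw [hex]
      gcongr
    have h2 : 1 / (K : ℝ) ≤ ε / 2 := by
      rw [div_le_iff₀ hK0]
      rw [div_lt_iff₀ hε] at hK
      linarith
    calc _ ≤ 1 / (K : ℝ) * PowerSeries.coeff m (gf ω ^ (n + 1)) := by gcongr
      _ ≤ _ := by gcongr
  linarith

/-! ### Positivity and the limit -/

lemma coeff_gf_pow_pos_of_mem {ω : ℕ → ℝ} (hω : ∀ i, 0 ≤ ω i) (h0 : 0 < ω 0) {m : ℕ}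
    (hm : m ∈ AddSubmonoid.closure {j : ℕ | 1 ≤ j ∧ 0 < ω j}) :
    ∀ n, m ≤ n → 0 < PowerSeries.coeff m (gf ω ^ n) := by
  have hmul : ∀ A B : PowerSeries ℝ, CLe 0 A → CLe 0 B → ∀ i j,
      0 < PowerSeries.coeff i A → 0 < PowerSeries.coeff j B →
      0 < PowerSeries.coeff (i + j) (A * B) := by
    intro A B hA hB i j hi hj
    rw [PowerSeries.coeff_mul]
    refine lt_of_lt_of_le (mul_pos hi hj) (single_le_sum (f := fun p : ℕ × ℕ =>
      PowerSeries.coeff p.1 A * PowerSeries.coeff p.2 B) (fun p _ => ?_)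
      (HasAntidiagonal.mem_antidiagonal.2 (rfl : (i, j).1 + (i, j).2 = i + j)))
    exact mul_nonneg (by simpa using hA p.1) (by simpa using hB p.2)
  have hG := zero_cle_gf hω
  have hzero : ∀ n, 0 < PowerSeries.coeff 0 (gf ω ^ n) := by
    intro n
    rw [PowerSeries.coeff_zero_eq_constantCoeff_apply, map_pow, gf,
      ← PowerSeries.coeff_zero_eq_constantCoeff_apply, PowerSeries.coeff_mk]
    positivity
  induction hm using AddSubmonoid.closure_induction with
  | mem j hj =>
    intro n hn
    obtain ⟨n, rfl⟩ : ∃ n', n = n' + 1 := ⟨n - 1, by have := hj.1; omega⟩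
    rw [pow_succ']
    exact hmul _ _ hG (CLe.pow_nonneg hG n) j 0 (by simpa [gf] using hj.2) (hzero n)
  | zero => exact fun n _ => hzero n
  | add i j _ _ hi hj =>
    intro n hn
    rw [← Nat.add_sub_cancel' (show i ≤ n by omega), pow_add]
    exact hmul _ _ (CLe.pow_nonneg hG _) (CLe.pow_nonneg hG _) i j (hi i le_rfl)
      (hj _ (by omega))

/-- Total contents `m` divisible by `d` with `m` large are attainable. -/
lemma exists_coeff_gf_pow_pos {ω : ℕ → ℝ} (hω : ∀ i, 0 ≤ ω i) (h0 : 0 < ω 0) {d : ℕ}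
    (hd_gcd : ∀ e : ℕ, (∀ j, 1 ≤ j → 0 < ω j → e ∣ j) → e ∣ d) :
    ∃ M, ∀ m, M ≤ m → d ∣ m → ∀ n, m ≤ n → 0 < PowerSeries.coeff m (gf ω ^ n) := by
  obtain ⟨M, hM⟩ := Nat.exists_mem_closure_of_ge {j : ℕ | 1 ≤ j ∧ 0 < ω j}
  refine ⟨M, fun m hm hdm => coeff_gf_pow_pos_of_mem hω h0 (hM m hm (dvd_trans ?_ hdm))⟩
  exact hd_gcd _ fun j h1 h2 => Nat.setGcd_dvd_of_mem ⟨h1, h2⟩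

/-- Adding `c` boxes multiplies the partition function asymptotically by `ω(0) ^ c`, as the
additional boxes are empty with probability tending to one. -/
lemma tendsto_coeff_gf_pow_div {ω : ℕ → ℝ} (hω : ∀ i, 0 ≤ ω i) (h0 : 0 < ω 0)
    (hIII : ∀ t : ℝ, 0 < t → ¬ Summable (fun i => ω i * t ^ i)) {d : ℕ}
    (hd_gcd : ∀ e : ℕ, (∀ j, 1 ≤ j → 0 < ω j → e ∣ j) → e ∣ d) (c : ℕ) :
    Filter.Tendsto (fun m => PowerSeries.coeff m (gf ω ^ (m + 1 + c)) /
        (ω 0 ^ c * PowerSeries.coeff m (gf ω ^ (m + 1))))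
      (Filter.atTop ⊓ Filter.principal {m | d ∣ m}) (nhds 1) := by
  obtain ⟨M, hM⟩ := exists_coeff_gf_pow_pos hω h0 hd_gcd
  have hpos : ∀ᶠ m in Filter.atTop ⊓ Filter.principal {m | d ∣ m},
      ∀ n, m ≤ n → 0 < PowerSeries.coeff m (gf ω ^ n) := by
    rw [Filter.eventually_inf_principal]
    filter_upwards [Filter.eventually_ge_atTop M] with m hm hd
    exact hM m hm hd
  induction c with
  | zero =>
    refine tendsto_const_nhds.congr' ?_
    filter_upwards [hpos] with m hm
    rw [pow_zero, one_mul, add_zero, div_self (hm _ (by omega)).ne']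
  | succ c ih =>
    have hstep : Filter.Tendsto (fun m => ω 0 * PowerSeries.coeff m (gf ω ^ (m + 1 + c)) /
        PowerSeries.coeff m (gf ω ^ (m + 1 + c + 1)))
        (Filter.atTop ⊓ Filter.principal {m | d ∣ m}) (nhds 1) := by
      rw [Metric.tendsto_nhds]
      intro ε hε
      obtain ⟨N, hN⟩ := exists_nonempty_negligible hω h0 hIII (half_pos hε)
      filter_upwards [hpos, Filter.mem_inf_of_left (Filter.eventually_ge_atTop N)] with m hm hmN
      have hp := hm (m + 1 + c + 1) (by omega)
      have hlow := hN (m + 1 + c) (le_trans (show N ≤ m from hmN) (by omega)) m (by omega)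
      have hup : ω 0 * PowerSeries.coeff m (gf ω ^ (m + 1 + c)) ≤
          PowerSeries.coeff m (gf ω ^ (m + 1 + c + 1)) := by
        have := CLe.mul (zero_cle_monomial 0 (hω 0))
          (CLe.pow_nonneg (zero_cle_gf hω) (m + 1 + c)) (monomial_cle_gf hω 0) (CLe.refl _) m
        rwa [← pow_succ', PowerSeries.monomial_zero_eq_C_apply, PowerSeries.coeff_C_mul] at this
      have h1 := (le_div_iff₀ hp).2 hlow
      have h2 := (div_le_one hp).2 hup
      rw [Real.dist_eq, abs_lt]
      constructor <;> linarith
    have h := ih.div hstep one_ne_zero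
    rw [div_one] at h
    refine h.congr' ?_
    filter_upwards [hpos] with m hm
    have p1 := hm (m + 1) (by omega)
    have p2 := hm (m + 1 + c) (by omega)
    have p3 := hm (m + 1 + c + 1) (by omega)
    rw [Pi.div_apply, ← add_assoc, pow_succ (ω 0)]
    field_simp

/-- **Normalized forest-weight limit in type III** (Equation (quint)): if `ω 0 > 0`,
`ω k > 0` for some `k ≥ 2`, and `∑ ω k t^k` diverges for every `t > 0`, then for each
`k ≥ 2`, along `n ≡ k (mod d)` (where `d` is the span of `ω`, characterized by the
gcd property below) one has `a (n-k+1) > 0` and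
`S_k(n) / (ω(0)^(k-1) · a(n-k+1)) → k`. -/
theorem normalized_forest_weight_limit (ω : ℕ → ℝ) (hω : ∀ i, 0 ≤ ω i)
    (h0 : 0 < ω 0) (h2 : ∃ k, 2 ≤ k ∧ 0 < ω k)
    (hIII : ∀ t : ℝ, 0 < t → ¬ Summable (fun i => ω i * t ^ i))
    (d : ℕ)
    (hd_dvd : ∀ j, 1 ≤ j → 0 < ω j → d ∣ j)
    (hd_gcd : ∀ e : ℕ, (∀ j, 1 ≤ j → 0 < ω j → e ∣ j) → e ∣ d) :
    ∀ k, 2 ≤ k → ∀ ε : ℝ, 0 < ε → ∃ N : ℕ, ∀ n, N ≤ n → n % d = k % d →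
      0 < a ω (n - k + 1) ∧
      |S ω k n / (ω 0 ^ (k - 1) * a ω (n - k + 1)) - (k : ℝ)| ≤ ε := by


  intro k hk ε hε
  obtain ⟨M, hM⟩ := exists_coeff_gf_pow_pos hω h0 hd_gcd
  have hlin : Filter.Tendsto (fun m : ℕ => ((m : ℝ) + 1) / (m + k))
      (Filter.atTop ⊓ Filter.principal {m | d ∣ m}) (nhds 1) := by
    refine Filter.Tendsto.mono_left ?_ inf_le_left
    have := tendsto_add_mul_div_add_mul_atTop_nhds (1 : ℝ) (k : ℝ) 1 one_ne_zero
    simpa [add_comm] using this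
  have hlim := ((hlin.mul (tendsto_coeff_gf_pow_div hω h0 hIII hd_gcd (k - 1))).const_mul (k : ℝ))
  rw [one_mul, mul_one] at hlim
  have hev := Metric.tendsto_nhds.1 hlim ε hε
  rw [Filter.eventually_inf_principal, Filter.eventually_atTop] at hev
  obtain ⟨N, hN⟩ := hev
  refine ⟨max M N + k, fun n hn hmod => ?_⟩
  obtain ⟨m, rfl⟩ : ∃ m, n = m + k := ⟨n - k, by omega⟩
  have hdm : d ∣ m := by
    have := (Nat.modEq_iff_dvd' (Nat.le_add_left k m)).1 hmod.symm
    rwa [Nat.add_sub_cancel] at this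
  have hmM : M ≤ m := (le_max_left M N).trans (by omega)
  have hmN : N ≤ m := (le_max_right M N).trans (by omega)
  have hp1 := hM m hmM hdm (m + 1) (by omega)
  have ha : a ω (m + 1) = PowerSeries.coeff m (gf ω ^ (m + 1)) / ((m : ℝ) + 1) := by
    have := mul_passage ω (m + 1) 1 m rfl
    push_cast at this
    rw [a_eq_passage, eq_div_iff (by positivity)]
    linarith
  have hk0 : (0 : ℝ) < k := by exact_mod_cast (by omega : 0 < k)
  have hS : S ω k (m + k) = k * PowerSeries.coeff m (gf ω ^ (m + k)) / ((m : ℝ) + k) := by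
    have := mul_passage ω (m + k) k m rfl
    push_cast at this
    rw [S_eq_passage, eq_div_iff (by positivity)]
    linarith
  rw [Nat.add_sub_cancel]
  refine ⟨by rw [ha]; positivity, ?_⟩
  have hfin := (hN m hmN hdm).le
  rw [Real.dist_eq, show m + 1 + (k - 1) = m + k by omega] at hfin
  rw [hS, ha]
  refine le_of_eq_of_le ?_ hfin
  congr 2
  field_simp

end EnrichedTrees
end

section
/- Bounded number of components in superexponential Gibbs partitions (Equation (tos1) in the proof of Theorem te:need): Under the stated hypotheses there exists an integer L ≥ 1 such that for every ε > 0 there is N with the property that for all n ≥ N: ∑_{ℓ≥L} f(ℓ)·c_ℓ(n) ≤ ε·∑_{1≤ℓ<L} f(ℓ)·c_ℓ(n). -/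
/-!
The generating function of the `ℓ`-component weights `c a ℓ ·` is `A ^ ℓ`, where `A = ∑ a i z ^ i`.
Cut `A = P + T` with `P` the polynomial part below an index `I ≥ 2` and `T` the part from `I` on.

* The giant-part condition at `k = 2` says that `∑ a i * a (n + 1 - i)` over `2 ≤ i ≤ n - 1` is
  `o(a n)` (`conv_small`). Hence `T * A ≤ C z T` coefficientwise for a constant `C`
  (`tail_mul_le`), and expanding `A ^ ℓ` by the first factor `T` gives
  `A ^ ℓ ≤ P ^ ℓ + ℓ C ^ (ℓ - 1) z ^ (ℓ - 1) T` (`pow_le_of_mul_le`, `c_le`).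
* The coefficients of `P ^ ℓ` are at most `P(x) ^ ℓ x ^ (-n)` for every `x > 0`. As `P(0) = 0`, some
  `x` has `P(x)` inside the disc of convergence of `∑ f ℓ z ^ ℓ`, so these terms contribute at
  most exponentially in `n`, whereas `a` grows superexponentially on `1 + dℕ` (`growth`).
* The terms with `T` contribute at most `∑_{ℓ ≥ L} D ^ ℓ a (n + 1 - ℓ)`. Let `ℓ₀ ≡ n (mod d)` with
  `f ℓ₀ > 0`, fix `m` with `a m > 0`, and put `w = (ℓ₀ - 1) m`, `q = n - w`. If `L` is large
  compared with `w`, then `D ^ (ℓ - w) ≤ a (ℓ - w)` by the growth of `a`, so this sum is at most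
  `D ^ w` times a convolution sum at `q + 1`, which is `o(a q)` by the giant-part condition again.
  On the other side `c a ℓ₀ n ≥ a m ^ (ℓ₀ - 1) * a q` (`le_c`). This is `tail_small`.

Since `c a ℓ n = 0` unless `ℓ ≡ n (mod d)`, it suffices to choose one `ℓ₀` for each of the finitely
many residue classes modulo `d` in which `f` does not vanish at positive indices.
-/

open Finset
open scoped Classical

namespace Gibbs

/-- `c a ℓ n`: sum of `a i₁ ⋯ a i_ℓ` over all `ℓ`-tuples of positive integers with
`i₁ + ⋯ + i_ℓ = n` (the total weight of `ℓ`-component composite structures of size `n`). -/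
noncomputable def c (a : ℕ → ℝ) (ℓ n : ℕ) : ℝ :=
  ∑ t ∈ (Finset.Nat.antidiagonalTuple ℓ n).filter (fun t => ∀ j, 0 < t j),
    ∏ j, a (t j)

/-- `cCap a ℓ n m`: as `c a ℓ n`, but restricted to tuples all of whose entries are `≤ m`. -/
noncomputable def cCap (a : ℕ → ℝ) (ℓ n m : ℕ) : ℝ :=
  ∑ t ∈ (Finset.Nat.antidiagonalTuple ℓ n).filter
      (fun t => (∀ j, 0 < t j) ∧ (∀ j, t j ≤ m)),
    ∏ j, a (t j)

/-- The giant-part condition at `k`. -/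
def GiantPartAt (a : ℕ → ℝ) (k : ℕ) : Prop :=
  ∀ ε : ℝ, 0 < ε → ∃ N : ℕ, ∀ n, N ≤ n → cCap a k n (n - k) ≤ ε * a (n - k + 1)
/-! ### Component weights and the growth of `a` -/

open PowerSeries in
/-- Positivity of the parts is automatic in the generating function because `a 0 = 0`. -/
theorem c_eq_coeff (a : ℕ → ℝ) (ha0 : a 0 = 0) (ℓ n : ℕ) :
    c a ℓ n = coeff n (PowerSeries.mk a ^ ℓ) := by
  have h1 : (PowerSeries.mk a) ^ ℓ = ∏ _j : Fin ℓ, PowerSeries.mk a := by simp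
  rw [h1, PowerSeries.coeff_prod, c, Finset.sum_filter_of_ne]
  · refine Finset.sum_bij' (fun t _ => Finsupp.equivFunOnFinite.symm t) (fun t _ => ⇑t)
      ?_ ?_ ?_ ?_ ?_
    · intro t ht
      simpa [Finset.mem_finsuppAntidiag, Finset.Nat.mem_antidiagonalTuple] using ht
    · intro t ht
      simpa [Finset.mem_finsuppAntidiag, Finset.Nat.mem_antidiagonalTuple] using ht
    · intro t ht
      rfl
    · intro t ht
      ext
      rfl
    · intro t ht
      simp
  · intro t _ hne j
    rcases Nat.eq_zero_or_pos (t j) with h | h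
    · exact absurd (Finset.prod_eq_zero (Finset.mem_univ j) (by rw [h, ha0])) hne
    · exact h

theorem c_nonneg (a : ℕ → ℝ) (ha : ∀ i, 0 ≤ a i) (ℓ n : ℕ) : 0 ≤ c a ℓ n :=
  Finset.sum_nonneg fun _ _ => Finset.prod_nonneg fun _ _ => ha _

/-- The number of components and the total size agree modulo the span `d`. -/
theorem c_eq_zero_of_lattice (a : ℕ → ℝ) (d : ℕ)
    (hlattice : ∀ i, i % d ≠ 1 % d → a i = 0) (ℓ n : ℕ) (h : ¬ n ≡ ℓ [MOD d]) :
    c a ℓ n = 0 := by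
  refine Finset.sum_eq_zero fun t ht => ?_
  by_contra hne
  apply h
  have h2 : ∀ j, t j ≡ 1 [MOD d] := fun j => by
    by_contra hj
    exact hne (Finset.prod_eq_zero (Finset.mem_univ j) (hlattice _ hj))
  have h3 : ∑ j, t j = n := Finset.Nat.mem_antidiagonalTuple.1 (Finset.mem_filter.1 ht).1
  have h4 : ∑ j, t j ≡ ∑ _j : Fin ℓ, 1 [MOD d] := Nat.ModEq.sum fun j _ => h2 j
  simpa [h3] using h4

/-- The giant-part condition at `k = 2`, as a bound on partial convolution sums. -/
theorem conv_small (a : ℕ → ℝ) (ha : ∀ i, 0 ≤ a i) (h2 : GiantPartAt a 2)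
    (ε : ℝ) (hε : 0 < ε) :
    ∃ N : ℕ, ∀ n, N ≤ n → ∀ S : Finset ℕ, (∀ i ∈ S, 2 ≤ i ∧ i + 1 ≤ n) →
      ∑ i ∈ S, a i * a (n + 1 - i) ≤ ε * a n := by
  obtain ⟨N, hN⟩ := h2 ε hε
  refine ⟨N + 1, fun n hn S hS => ?_⟩
  have h := hN (n + 1) (by omega)
  rw [show n + 1 - 2 + 1 = n by omega] at h
  refine le_trans ?_ h
  have hinj : Set.InjOn (fun i : ℕ => (![i, n + 1 - i] : Fin 2 → ℕ)) S := by
    intro i _ j _ hij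
    simpa using congrFun hij 0
  rw [cCap, show (∑ i ∈ S, a i * a (n + 1 - i)) =
    ∑ t ∈ S.image (fun i : ℕ => (![i, n + 1 - i] : Fin 2 → ℕ)), ∏ j, a (t j) by
      rw [Finset.sum_image hinj]; simp [Fin.prod_univ_two]]
  refine Finset.sum_le_sum_of_subset_of_nonneg ?_ fun t _ _ => Finset.prod_nonneg fun _ _ => ha _
  intro t ht
  obtain ⟨i, hi, rfl⟩ := Finset.mem_image.1 ht
  have := hS i hi
  simp only [Finset.mem_filter, Finset.Nat.mem_antidiagonalTuple, Fin.sum_univ_two, Fin.forall_fin_two]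
  simp
  omega

/-- Superexponential growth along the progression `1 + dℕ`: for a fixed `u ∈ dℕ` with
`a (u + 1) > 0`, the single term `a (u + 1) * a (q - u)` of the convolution is `o(a q)`, so
`a (q - u) = o(a q)`. -/
theorem growth (a : ℕ → ℝ) (ha : ∀ i, 0 ≤ a i) (d : ℕ) (hd : 1 ≤ d)
    (I : ℕ) (hI : ∀ i, I ≤ i → i % d = 1 % d → 0 < a i)
    (h2 : GiantPartAt a 2) (E : ℝ) (hE : 0 < E) (ε : ℝ) (hε : 0 < ε) :
    ∃ N : ℕ, ∀ q, N ≤ q → q % d = 1 % d → E ^ q ≤ ε * a q := by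
  -- `u` is a shift preserving the residue class, with `a (u + 1) > 0`
  set u := d * (I + 1) with hu
  have huI : I + 1 ≤ u := Nat.le_mul_of_pos_left _ hd
  have hs : 0 < a (u + 1) := hI _ (by omega) (by rw [hu, Nat.mul_add_mod])
  have hF : 0 < 2 * E := by positivity
  set F := 2 * E
  obtain ⟨N, hN⟩ := conv_small a ha h2 (a (u + 1) / F ^ u) (by positivity)
  have step : ∀ q, N + u + 2 ≤ q → F ^ u * a (q - u) ≤ a q := by
    intro q hq
    have h := hN q (by omega) {u + 1} (by simp; omega)
    rw [Finset.sum_singleton, show q + 1 - (u + 1) = q - u by omega, div_mul_eq_mul_div,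
      le_div_iff₀ (by positivity)] at h
    have : a (u + 1) * (F ^ u * a (q - u)) ≤ a (u + 1) * a q := by linarith
    exact le_of_mul_le_mul_left this hs
  -- one period of length `u` fixes the constant; the step inequality then propagates the bound
  obtain ⟨κ, hκ, hκ'⟩ : ∃ κ : ℝ, 0 < κ ∧
      ∀ q < N + u + 2 + I, I ≤ q → q % d = 1 % d → κ * F ^ q ≤ a q := by
    generalize N + u + 2 + I = M
    induction M with
    | zero => exact ⟨1, one_pos, by simp⟩
    | succ M ih =>
      obtain ⟨κ, hκ, h⟩ := ih
      by_cases hM : I ≤ M ∧ M % d = 1 % d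
      · have hp := hI M hM.1 hM.2
        refine ⟨min κ (a M / F ^ M), lt_min hκ (by positivity), fun q hq h1 h3 => ?_⟩
        rcases Nat.lt_succ_iff_lt_or_eq.1 hq with hlt | rfl
        · exact le_trans (mul_le_mul_of_nonneg_right (min_le_left _ _) (by positivity))
            (h q hlt h1 h3)
        · rw [← le_div_iff₀ (by positivity)]
          exact min_le_right _ _
      · refine ⟨κ, hκ, fun q hq h1 h3 => ?_⟩
        rcases Nat.lt_succ_iff_lt_or_eq.1 hq with hlt | rfl
        · exact h q hlt h1 h3
        · exact absurd ⟨h1, h3⟩ hM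
  have key : ∀ q, I ≤ q → q % d = 1 % d → κ * F ^ q ≤ a q := by
    intro q
    induction q using Nat.strong_induction_on with
    | _ q ih =>
      intro h1 h3
      by_cases hq : q < N + u + 2 + I
      · exact hκ' q hq h1 h3
      · have h4 := ih (q - u) (by omega) (by omega) (by
          rw [← h3]
          conv_rhs => rw [show q = q - u + d * (I + 1) by omega]
          rw [Nat.add_mul_mod_self_left])
        calc κ * F ^ q = F ^ u * (κ * F ^ (q - u)) := by
              rw [show F ^ q = F ^ (u + (q - u)) by congr 1; omega, pow_add]; ring
          _ ≤ F ^ u * a (q - u) := by gcongr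
          _ ≤ a q := step q (by omega)
  obtain ⟨M, hM⟩ := exists_pow_lt_of_lt_one (mul_pos hε hκ) (show (1 / 2 : ℝ) < 1 by norm_num)
  refine ⟨M + I, fun q hq h3 => ?_⟩
  have h5 : (1 / 2 : ℝ) ^ q ≤ ε * κ :=
    (pow_le_pow_of_le_one (by norm_num) (by norm_num) (by omega)).trans hM.le
  calc E ^ q = (1 / 2) ^ q * F ^ q := by rw [← mul_pow]; congr 1; simp [F]
    _ ≤ ε * κ * F ^ q := by gcongr
    _ = ε * (κ * F ^ q) := by ring
    _ ≤ ε * a q := by gcongr; exact key q (by omega) h3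

/-! ### Coefficientwise domination of power series -/

/-- Coefficientwise order on real power series. -/
def CoeffLE (U V : PowerSeries ℝ) : Prop := ∀ n, PowerSeries.coeff n U ≤ PowerSeries.coeff n V

theorem CoeffLE.refl (U : PowerSeries ℝ) : CoeffLE U U := fun _ => le_rfl

theorem CoeffLE.trans {U V W : PowerSeries ℝ} (h : CoeffLE U V) (h' : CoeffLE V W) :
    CoeffLE U W := fun n => (h n).trans (h' n)

theorem CoeffLE.add {U V U' V' : PowerSeries ℝ} (h : CoeffLE U V) (h' : CoeffLE U' V') :
    CoeffLE (U + U') (V + V') := fun n => by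
  simpa only [map_add] using add_le_add (h n) (h' n)

theorem CoeffLE.mul_right {U V W : PowerSeries ℝ} (h : CoeffLE U V) (hW : CoeffLE 0 W) :
    CoeffLE (U * W) (V * W) := fun n => by
  rw [PowerSeries.coeff_mul, PowerSeries.coeff_mul]
  exact Finset.sum_le_sum fun p _ =>
    mul_le_mul_of_nonneg_right (h p.1) (by simpa using hW p.2)

theorem CoeffLE.mul_left {U V W : PowerSeries ℝ} (h : CoeffLE U V) (hW : CoeffLE 0 W) :
    CoeffLE (W * U) (W * V) := by
  rw [mul_comm W, mul_comm W]; exact h.mul_right hW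

theorem CoeffLE.mul_nonneg {U V : PowerSeries ℝ} (h : CoeffLE 0 U) (h' : CoeffLE 0 V) :
    CoeffLE 0 (U * V) := by simpa using h.mul_right h'

theorem CoeffLE.pow_nonneg {U : PowerSeries ℝ} (h : CoeffLE 0 U) (k : ℕ) :
    CoeffLE 0 (U ^ k) := by
  induction k with
  | zero =>
    intro n
    simp only [pow_zero, map_zero, PowerSeries.coeff_one]
    split_ifs <;> norm_num
  | succ k ih => rw [pow_succ]; exact ih.mul_nonneg h

theorem CoeffLE.pow_le {U V : PowerSeries ℝ} (hU : CoeffLE 0 U) (h : CoeffLE U V) (k : ℕ) :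
    CoeffLE (U ^ k) (V ^ k) := by
  induction k with
  | zero => simpa using CoeffLE.refl _
  | succ k ih =>
    rw [pow_succ, pow_succ]
    exact (ih.mul_right hU).trans (h.mul_left ((hU.trans h).pow_nonneg k))

theorem mul_coeff_le {U V : PowerSeries ℝ} (hU : CoeffLE 0 U) (hV : CoeffLE 0 V) (i j : ℕ) :
    PowerSeries.coeff i U * PowerSeries.coeff j V ≤ PowerSeries.coeff (i + j) (U * V) := by
  rw [PowerSeries.coeff_mul]
  exact Finset.single_le_sum (f := fun p : ℕ × ℕ => PowerSeries.coeff p.1 U * PowerSeries.coeff p.2 V)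
    (fun p _ => _root_.mul_nonneg (by simpa using hU p.1) (by simpa using hV p.2))
    (Finset.HasAntidiagonal.mem_antidiagonal.2 (rfl : (i, j).1 + (i, j).2 = i + j))

/-- Expand `(P + T) ^ (k + 1)` according to the position of the first factor `T`: the remaining
factors `P` and `P + T` are absorbed into `T` one at a time, each costing a factor `D`. -/
theorem pow_le_of_mul_le {P T D : PowerSeries ℝ} (hP : CoeffLE 0 P) (hT : CoeffLE 0 T)
    (hD : CoeffLE 0 D) (h : CoeffLE (T * (P + T)) (D * T)) (k : ℕ) :
    CoeffLE ((P + T) ^ (k + 1)) (P ^ (k + 1) + ((k : PowerSeries ℝ) + 1) * (D ^ k * T)) := by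
  have hA : CoeffLE 0 (P + T) := by simpa using hP.add hT
  have hPA : CoeffLE P (P + T) := by simpa using (CoeffLE.refl P).add hT
  have hpow : ∀ k : ℕ, CoeffLE (T * (P + T) ^ k) (D ^ k * T) := by
    intro k
    induction k with
    | zero => simpa using CoeffLE.refl _
    | succ k ih =>
      have h1 := ih.mul_right hA
      have h2 := h.mul_left (hD.pow_nonneg k)
      have e1 : T * (P + T) ^ (k + 1) = T * (P + T) ^ k * (P + T) := by ring
      have e2 : D ^ (k + 1) * T = D ^ k * (D * T) := by ring
      rw [e1, e2]
      rw [mul_assoc (D ^ k)] at h1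
      exact h1.trans h2
  induction k with
  | zero => simpa using CoeffLE.refl _
  | succ k ih =>
    have hk : CoeffLE 0 ((k : PowerSeries ℝ) + 1) := by
      intro n
      rw [← Nat.cast_succ, ← map_natCast (PowerSeries.C (R := ℝ)), PowerSeries.coeff_C]
      split_ifs
      · simp only [map_zero]; positivity
      · simp
    have h1 := ih.mul_right hA
    have h2 : CoeffLE (T * P ^ (k + 1)) (D ^ (k + 1) * T) :=
      ((hP.pow_le hPA (k + 1)).mul_left hT).trans (hpow (k + 1))
    have h3 := (h.mul_left (hk.mul_nonneg (hD.pow_nonneg k)))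
    have h4 := (CoeffLE.refl (P ^ (k + 2))).add (h2.add h3)
    refine (h1.trans (CoeffLE.trans (V := P ^ (k + 2) + (T * P ^ (k + 1) + (k + 1 : PowerSeries ℝ) * D ^ k * (T * (P + T)))) ?_ h4)).trans ?_ |> fun h => by
        rw [pow_succ (P + T) (k + 1)]; exact h
    · intro n; apply le_of_eq; congr 1; ring
    · intro n; apply le_of_eq; congr 1; push_cast; ring

open Polynomial in
/-- Saddle-point bound for the coefficients of a polynomial with nonnegative coefficients. -/
theorem poly_coeff_mul_pow_le (p : ℝ[X]) (hp : ∀ i, 0 ≤ p.coeff i) (x : ℝ) (hx : 0 ≤ x)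
    (k n : ℕ) : (p ^ k).coeff n * x ^ n ≤ (p.eval x) ^ k := by
  have hpk : ∀ i, 0 ≤ (p ^ k).coeff i := by
    have := CoeffLE.pow_nonneg (U := (p : PowerSeries ℝ)) (fun i => by simpa using hp i) k
    intro i
    simpa [← Polynomial.coe_pow] using this i
  rw [← Polynomial.eval_pow, Polynomial.eval_eq_sum_range]
  by_cases hn : n ≤ (p ^ k).natDegree
  · exact Finset.single_le_sum (f := fun i => (p ^ k).coeff i * x ^ i)
      (fun i _ => mul_nonneg (hpk i) (pow_nonneg hx i)) (Finset.mem_range_succ_iff.2 hn)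
  · rw [Polynomial.coeff_eq_zero_of_natDegree_lt (by omega), zero_mul]
    exact Finset.sum_nonneg fun i _ => mul_nonneg (hpk i) (pow_nonneg hx i)

/-! ### Uniform bounds in the number of components -/

/-- Multiplying the tail `T` of `a` by `a` costs a constant factor and a shift by one. -/
theorem tail_mul_le (a : ℕ → ℝ) (ha : ∀ i, 0 ≤ a i) (ha0 : a 0 = 0) (d : ℕ)
    (hlattice : ∀ i, i % d ≠ 1 % d → a i = 0)
    (I : ℕ) (hI2 : 2 ≤ I) (hI : ∀ i, I ≤ i → i % d = 1 % d → 0 < a i)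
    (h2 : GiantPartAt a 2) :
    ∃ C : ℝ, 1 ≤ C ∧
      CoeffLE (PowerSeries.mk (fun i => if I ≤ i then a i else 0) * PowerSeries.mk a)
        (PowerSeries.C C * PowerSeries.X * PowerSeries.mk (fun i => if I ≤ i then a i else 0)) := by
  set T : ℕ → ℝ := fun i => if I ≤ i then a i else 0 with hT
  have hT0 : ∀ i, 0 ≤ T i := fun i => by
    simp only [hT]; split_ifs
    · exact ha i
    · exact le_rfl
  set W : ℕ → ℝ := fun n => ∑ i ∈ Finset.range n, T i * a (n + 1 - i) with hW
  have hW0 : ∀ n, 0 ≤ W n := fun n => Finset.sum_nonneg fun i _ => mul_nonneg (hT0 i) (ha _)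
  have hcoeff : ∀ n, PowerSeries.coeff (n + 1) (PowerSeries.mk T * PowerSeries.mk a) =
      W n + T n * a 1 := by
    intro n
    rw [PowerSeries.coeff_mul, Finset.Nat.sum_antidiagonal_eq_sum_range_succ_mk,
      Finset.sum_range_succ, Finset.sum_range_succ]
    simp [ha0, hW]
  -- where `T n` vanishes so does `W n`, by congruence modulo `d` or because `n` is too small;
  -- hence the ratio bound for large `n` extends to all `n` at the price of a constant
  have hzero : ∀ n, T n = 0 → W n = 0 := by
    intro n hn
    refine Finset.sum_eq_zero fun i hi => ?_
    have hin := Finset.mem_range.1 hi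
    by_cases hIi : I ≤ i
    · have hne : n % d ≠ 1 % d := fun h => by
        have := hI n (by omega) h
        simp only [hT, if_pos (show I ≤ n by omega)] at hn
        exact this.ne' hn
      by_cases h1 : i % d = 1 % d
      · rw [hlattice (n + 1 - i), mul_zero]
        intro h
        have h3 : i + (n + 1 - i) ≡ 1 + 1 [MOD d] := Nat.ModEq.add h1 h
        rw [show i + (n + 1 - i) = n + 1 by omega] at h3
        exact hne (Nat.ModEq.add_right_cancel' 1 h3)
      · simp [hT, hlattice i h1]
    · simp [hT, hIi]
  obtain ⟨N, hN⟩ := conv_small a ha h2 1 one_pos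
  have hbig : ∀ n, N + I ≤ n → W n ≤ T n := by
    intro n hn
    have h := hN n (by omega) (Finset.Ico I n) (fun i hi => by
      have := Finset.mem_Ico.1 hi; omega)
    have e : W n = ∑ i ∈ Finset.Ico I n, a i * a (n + 1 - i) := by
      rw [hW]
      symm
      refine Finset.sum_subset_zero_on_sdiff (fun i hi => ?_) (fun i hi => ?_) (fun i hi => ?_)
      · simp at hi ⊢; omega
      · have : ¬ I ≤ i := by simp at hi; omega
        simp [hT, this]
      · have : I ≤ i := (Finset.mem_Ico.1 hi).1
        simp [hT, this]
    rw [e, hT]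
    simpa [show I ≤ n by omega] using h
  have hS : 0 ≤ ∑ j ∈ Finset.range (N + I), W j / T j :=
    Finset.sum_nonneg fun i _ => div_nonneg (hW0 i) (hT0 i)
  have hWC : ∀ n, W n ≤ (1 + ∑ j ∈ Finset.range (N + I), W j / T j) * T n := by
    intro n
    rcases (hT0 n).eq_or_lt with h0 | hpos
    · rw [hzero n h0.symm, ← h0, mul_zero]
    by_cases hn : N + I ≤ n
    · nlinarith [hbig n hn]
    · rw [← div_le_iff₀ hpos]
      have := Finset.single_le_sum (f := fun j => W j / T j)
        (fun i _ => div_nonneg (hW0 i) (hT0 i)) (Finset.mem_range.2 (not_le.1 hn))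
      linarith
  refine ⟨1 + ∑ j ∈ Finset.range (N + I), W j / T j + a 1, by linarith [ha 1], fun n => ?_⟩
  rw [mul_assoc, PowerSeries.coeff_C_mul]
  cases n with
  | zero => simp [hT, ha0]
  | succ n =>
    rw [hcoeff, PowerSeries.coeff_succ_X_mul, PowerSeries.coeff_mk]
    nlinarith [hWC n]

/-- Bound on the `ℓ`-component weight, uniform in `ℓ` and `n`: either all components are small
(first term) or there is a component of size at least `I` (second term). -/
theorem c_le (a : ℕ → ℝ) (ha : ∀ i, 0 ≤ a i) (ha0 : a 0 = 0) (d : ℕ)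
    (hlattice : ∀ i, i % d ≠ 1 % d → a i = 0)
    (I : ℕ) (hI2 : 2 ≤ I) (hI : ∀ i, I ≤ i → i % d = 1 % d → 0 < a i)
    (h2 : GiantPartAt a 2) :
    ∃ C : ℝ, 1 ≤ C ∧ ∀ ℓ n, 1 ≤ ℓ → ℓ ≤ n →
      c a ℓ n ≤ (PowerSeries.trunc I (PowerSeries.mk a) ^ ℓ).coeff n +
        ℓ * C ^ ℓ * (if I ≤ n + 1 - ℓ then a (n + 1 - ℓ) else 0) := by
  obtain ⟨C, hC, h⟩ := tail_mul_le a ha ha0 d hlattice I hI2 hI h2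
  refine ⟨C, hC, fun ℓ n hℓ hn => ?_⟩
  obtain ⟨k, rfl⟩ : ∃ k, ℓ = k + 1 := ⟨ℓ - 1, by omega⟩
  set p := PowerSeries.trunc I (PowerSeries.mk a) with hp
  set T := PowerSeries.mk (fun i => if I ≤ i then a i else 0) with hT
  have hA : PowerSeries.mk a = (p : PowerSeries ℝ) + T := by
    ext i
    simp only [hp, hT, map_add, Polynomial.coeff_coe, PowerSeries.coeff_trunc,
      PowerSeries.coeff_mk]
    by_cases hi : i < I
    · simp [hi, not_le.2 hi]
    · simp [hi, not_lt.1 hi]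
  have hp0 : CoeffLE 0 (p : PowerSeries ℝ) := fun i => by
    simp only [hp, map_zero, Polynomial.coeff_coe, PowerSeries.coeff_trunc, PowerSeries.coeff_mk]
    split_ifs
    exacts [ha i, le_rfl]
  have hT0 : CoeffLE 0 T := fun i => by
    simp only [hT, map_zero, PowerSeries.coeff_mk]
    split_ifs
    exacts [ha i, le_rfl]
  have hD : CoeffLE 0 (PowerSeries.C C * PowerSeries.X) := fun i => by
    rw [PowerSeries.coeff_C_mul, PowerSeries.coeff_X, map_zero]
    split_ifs <;> linarith
  have hb := pow_le_of_mul_le hp0 hT0 hD (by rw [hA] at h; exact h) k n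
  rw [c_eq_coeff a ha0, hA]
  refine hb.trans ?_
  rw [map_add, ← Polynomial.coe_pow, Polynomial.coeff_coe]
  have e : ((k : PowerSeries ℝ) + 1) * ((PowerSeries.C C * PowerSeries.X) ^ k * T) =
      PowerSeries.C (((k : ℝ) + 1) * C ^ k) * (PowerSeries.X ^ k * T) := by
    rw [mul_pow, map_mul, map_add, map_one, map_natCast, map_pow]; ring
  rw [e, PowerSeries.coeff_C_mul, PowerSeries.coeff_X_pow_mul', if_pos (by omega), hT,
    PowerSeries.coeff_mk, show n + 1 - (k + 1) = n - k by omega]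
  have hpos : 0 ≤ if I ≤ n - k then a (n - k) else 0 := by
    split_ifs
    exacts [ha _, le_rfl]
  push_cast
  gcongr
  omega

/-- Lower bound from one giant component and `j` components of size `m`. -/
theorem le_c (a : ℕ → ℝ) (ha : ∀ i, 0 ≤ a i) (ha0 : a 0 = 0) (m q j : ℕ) :
    a m ^ j * a q ≤ c a (j + 1) (j * m + q) := by
  have hA : CoeffLE 0 (PowerSeries.mk a) := fun i => by simpa using ha i
  rw [c_eq_coeff a ha0]
  induction j with
  | zero => simp
  | succ j ih =>
    have h := mul_coeff_le hA (hA.pow_nonneg (j + 1)) m (j * m + q)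
    rw [← pow_succ', PowerSeries.coeff_mk, show m + (j * m + q) = (j + 1) * m + q by ring] at h
    refine le_trans ?_ h
    rw [pow_succ', mul_assoc]
    exact mul_le_mul_of_nonneg_left ih (ha m)

/-- Domination of the weights with many components by the `ℓ₀`-component weight, for `n` in the
residue class of `ℓ₀`. The threshold on `L` does not depend on `ε`. The hypothesis `hI` is meant
with `I` already enlarged to be at least `2`. -/
theorem tail_small (a : ℕ → ℝ) (ha : ∀ i, 0 ≤ a i) (ha0 : a 0 = 0)
    (d : ℕ) (hd : 1 ≤ d) (hlattice : ∀ i, i % d ≠ 1 % d → a i = 0)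
    (I : ℕ) (hI2 : 2 ≤ I) (hI : ∀ i, I ≤ i → i % d = 1 % d → 0 < a i)
    (h2 : GiantPartAt a 2) (f : ℕ → ℝ) (hf : ∀ ℓ, 0 ≤ f ℓ)
    (t : ℝ) (ht : 0 < t) (hft : Summable (fun ℓ => f ℓ * t ^ ℓ)) :
    ∃ J m : ℕ, ∀ ℓ₀, 1 ≤ ℓ₀ → 0 < f ℓ₀ → ∀ L, ℓ₀ * m + J ≤ L → ∀ ε : ℝ, 0 < ε →
      ∃ N : ℕ, ∀ n, N ≤ n → n ≡ ℓ₀ [MOD d] →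
        ∑ ℓ ∈ Finset.Icc L n, f ℓ * c a ℓ n ≤ ε * (f ℓ₀ * c a ℓ₀ n) := by
  obtain ⟨C, hC, hcle⟩ := c_le a ha ha0 d hlattice I hI2 hI h2
  set p := PowerSeries.trunc I (PowerSeries.mk a) with hp
  set T : ℕ → ℝ := fun i => if I ≤ i then a i else 0 with hT
  have hp0 : ∀ i, 0 ≤ p.coeff i := fun i => by
    simp only [hp, PowerSeries.coeff_trunc, PowerSeries.coeff_mk]
    split_ifs
    exacts [ha i, le_rfl]
  have hT0 : ∀ i, 0 ≤ T i := fun i => by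
    simp only [hT]; split_ifs
    exacts [ha i, le_rfl]
  -- `p` has no constant term, so it is at most `t` at some positive point
  obtain ⟨x, hx, hpx⟩ : ∃ x : ℝ, 0 < x ∧ p.eval x < t := by
    have hc : Filter.Tendsto (fun x : ℝ => p.eval x) (nhdsWithin 0 (Set.Ioi 0)) (nhds 0) := by
      have := (p.continuous.tendsto 0).mono_left (nhdsWithin_le_nhds (s := Set.Ioi (0 : ℝ)))
      rwa [← Polynomial.coeff_zero_eq_eval_zero, hp, PowerSeries.coeff_trunc,
        if_pos (by omega), PowerSeries.coeff_mk, ha0] at this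
    obtain ⟨x, h1, h3⟩ := ((hc.eventually_lt_const ht).and self_mem_nhdsWithin).exists
    exact ⟨x, h3, h1⟩
  have hpx0 : 0 ≤ p.eval x := by
    rw [Polynomial.eval_eq_sum_range]
    exact Finset.sum_nonneg fun i _ => mul_nonneg (hp0 i) (pow_nonneg hx.le i)
  set K := 1 + ∑' ℓ, f ℓ * t ^ ℓ with hK
  have hterm0 : ∀ ℓ, 0 ≤ f ℓ * t ^ ℓ := fun ℓ => mul_nonneg (hf ℓ) (pow_nonneg ht.le ℓ)
  have hKpos : 0 < K := by
    have : 0 ≤ ∑' ℓ, f ℓ * t ^ ℓ := tsum_nonneg hterm0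
    linarith
  have hfin : ∀ s : Finset ℕ, ∑ ℓ ∈ s, f ℓ * t ^ ℓ ≤ K := fun s => by
    have := hft.sum_le_tsum s fun ℓ _ => hterm0 ℓ
    linarith
  set D := 2 * C / t with hD
  have hDpos : 0 < D := by positivity
  set X := 1 / x with hX
  have hXpos : 0 < X := by positivity
  have hpoint : ∀ ℓ n, 1 ≤ ℓ → ℓ ≤ n →
      f ℓ * c a ℓ n ≤ f ℓ * t ^ ℓ * X ^ n + K * (D ^ ℓ * T (n + 1 - ℓ)) := by
    intro ℓ n h1 hn
    have e1 : (p ^ ℓ).coeff n ≤ t ^ ℓ * X ^ n := by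
      rw [hX, one_div, inv_pow, ← div_eq_mul_inv, le_div_iff₀ (by positivity)]
      exact (poly_coeff_mul_pow_le p hp0 x hx.le ℓ n).trans (by gcongr)
    have e2 : f ℓ * (ℓ * C ^ ℓ) ≤ K * D ^ ℓ := by
      have h3 : f ℓ * t ^ ℓ ≤ K := by simpa using hfin {ℓ}
      have h4 : (ℓ : ℝ) ≤ 2 ^ ℓ := by exact_mod_cast Nat.lt_two_pow_self.le
      have : K * D ^ ℓ = K / t ^ ℓ * (2 ^ ℓ * C ^ ℓ) := by
        rw [hD, div_pow, mul_pow]; ring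
      rw [this]
      gcongr
      rwa [le_div_iff₀ (by positivity)]
    calc f ℓ * c a ℓ n ≤ f ℓ * (t ^ ℓ * X ^ n + ℓ * C ^ ℓ * T (n + 1 - ℓ)) := by
          refine mul_le_mul_of_nonneg_left ((hcle ℓ n h1 hn).trans ?_) (hf ℓ)
          gcongr
      _ = f ℓ * t ^ ℓ * X ^ n + f ℓ * (ℓ * C ^ ℓ) * T (n + 1 - ℓ) := by ring
      _ ≤ f ℓ * t ^ ℓ * X ^ n + K * D ^ ℓ * T (n + 1 - ℓ) := by
          have := mul_le_mul_of_nonneg_right e2 (hT0 (n + 1 - ℓ))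
          linarith
      _ = _ := by ring
  obtain ⟨J, hJ⟩ := growth a ha d hd I hI h2 D hDpos 1 one_pos
  set m := d * I + 1 with hm
  have hmI : I ≤ m := le_trans (Nat.le_mul_of_pos_left I hd) (Nat.le_succ _)
  have hm1 : m ≡ 1 [MOD d] := by
    rw [hm, Nat.ModEq, Nat.mul_add_mod]
  have ham : 0 < a m := hI m hmI hm1
  refine ⟨J + 2, m, fun ℓ₀ hℓ₀ hfℓ₀ L hL ε hε => ?_⟩
  obtain ⟨j, rfl⟩ : ∃ j, ℓ₀ = j + 1 := ⟨ℓ₀ - 1, by omega⟩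
  -- the comparison configuration: `j` parts of size `m` and one of size `n - w`
  set w := j * m with hw
  have hLw : w + J + 2 ≤ L := by
    have : (j + 1) * m = w + m := by rw [hw]; ring
    omega
  set β := ε * (f (j + 1) * a m ^ j) with hβ
  have hβpos : 0 < β := by positivity
  obtain ⟨N₁, hN₁⟩ := growth a ha d hd I hI h2 X hXpos (β / (2 * (K * X ^ w))) (by positivity)
  obtain ⟨N₂, hN₂⟩ := conv_small a ha h2 (β / (2 * (K * D ^ w))) (by positivity)
  refine ⟨N₁ + N₂ + w, fun n hn hmod => ?_⟩
  obtain ⟨q, rfl⟩ : ∃ q, n = w + q := ⟨n - w, by omega⟩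
  have hq1 : q ≡ 1 [MOD d] := by
    have h5 : w ≡ j [MOD d] := by simpa [hw] using hm1.mul_left j
    exact Nat.ModEq.add_left_cancel h5 hmod
  have hlow : β * a q ≤ ε * (f (j + 1) * c a (j + 1) (w + q)) := by
    calc β * a q = ε * (f (j + 1) * (a m ^ j * a q)) := by rw [hβ]; ring
      _ ≤ _ := by
        have := le_c a ha ha0 m q j
        gcongr
  refine le_trans ?_ hlow
  have hpoly : ∑ ℓ ∈ Finset.Icc L (w + q), f ℓ * t ^ ℓ * X ^ (w + q) ≤ β / 2 * a q := by
    rw [← Finset.sum_mul]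
    calc _ ≤ K * X ^ (w + q) := by gcongr; exact hfin _
      _ = K * X ^ w * X ^ q := by rw [pow_add]; ring
      _ ≤ K * X ^ w * (β / (2 * (K * X ^ w)) * a q) := by
          gcongr
          exact hN₁ q (by omega) hq1
      _ = β / 2 * a q := by field_simp
  have hmain : ∑ ℓ ∈ Finset.Icc L (w + q), D ^ ℓ * T (w + q + 1 - ℓ) ≤
      D ^ w * (β / (2 * (K * D ^ w)) * a q) := by
    set S := (Finset.Icc L (w + q)).filter fun ℓ => T (w + q + 1 - ℓ) ≠ 0 with hS
    have hinj : Set.InjOn (fun ℓ : ℕ => w + q + 1 - ℓ) S := by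
      intro i hi i' hi' h
      simp only [hS, Finset.coe_filter, Finset.mem_Icc, Set.mem_ofPred_eq] at hi hi' h
      omega
    -- the convolution `∑ a i * a (q + 1 - i)` at `i = n + 1 - ℓ` dominates the left-hand side,
    -- since its second factor outgrows `D ^ (ℓ - w)`
    have h6 := hN₂ q (by omega) (S.image fun ℓ => w + q + 1 - ℓ) (by
      intro i hi
      obtain ⟨ℓ, hℓ, rfl⟩ := Finset.mem_image.1 hi
      rw [hS, Finset.mem_filter, Finset.mem_Icc] at hℓ
      have : I ≤ w + q + 1 - ℓ := by
        by_contra h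
        exact hℓ.2 (if_neg h)
      omega)
    rw [Finset.sum_image hinj] at h6
    refine le_trans ?_ (mul_le_mul_of_nonneg_left h6 (by positivity))
    rw [Finset.mul_sum]
    have h7 : ∑ ℓ ∈ Finset.Icc L (w + q), D ^ ℓ * T (w + q + 1 - ℓ) =
        ∑ ℓ ∈ S, D ^ ℓ * T (w + q + 1 - ℓ) := by
      rw [hS, Finset.sum_filter_of_ne]
      intro ℓ _ h
      exact right_ne_zero_of_mul h
    rw [h7]
    refine Finset.sum_le_sum fun ℓ hℓ => ?_
    rw [hS, Finset.mem_filter, Finset.mem_Icc] at hℓ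
    have hIi : I ≤ w + q + 1 - ℓ := by
      by_contra h
      exact hℓ.2 (if_neg h)
    have hTa : T (w + q + 1 - ℓ) = a (w + q + 1 - ℓ) := if_pos hIi
    have hi1 : w + q + 1 - ℓ ≡ 1 [MOD d] := by
      by_contra h
      exact hℓ.2 (by rw [hTa]; exact hlattice _ h)
    rw [hTa, show q + 1 - (w + q + 1 - ℓ) = ℓ - w by omega]
    -- the complementary part `ℓ - w` lies in the progression, where `a` beats `D ^ ·`
    have h8 : ℓ - w ≡ 1 [MOD d] := by
      refine Nat.ModEq.add_left_cancel hi1 ?_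
      rw [show w + q + 1 - ℓ + (ℓ - w) = q + 1 by omega]
      exact hq1.add_right 1
    have h9 := hJ (ℓ - w) (by omega) h8
    rw [one_mul] at h9
    calc D ^ ℓ * a (w + q + 1 - ℓ) = D ^ w * (a (w + q + 1 - ℓ) * D ^ (ℓ - w)) := by
          rw [show D ^ ℓ = D ^ (w + (ℓ - w)) by congr 1; omega, pow_add]; ring
      _ ≤ _ := by
          have := ha (w + q + 1 - ℓ)
          gcongr
  calc ∑ ℓ ∈ Finset.Icc L (w + q), f ℓ * c a ℓ (w + q)
      ≤ ∑ ℓ ∈ Finset.Icc L (w + q),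
          (f ℓ * t ^ ℓ * X ^ (w + q) + K * (D ^ ℓ * T (w + q + 1 - ℓ))) := by
        refine Finset.sum_le_sum fun ℓ hℓ => ?_
        have := Finset.mem_Icc.1 hℓ
        exact hpoint ℓ _ (by omega) (by omega)
    _ = ∑ ℓ ∈ Finset.Icc L (w + q), f ℓ * t ^ ℓ * X ^ (w + q) +
          K * ∑ ℓ ∈ Finset.Icc L (w + q), D ^ ℓ * T (w + q + 1 - ℓ) := by
        rw [Finset.sum_add_distrib, Finset.mul_sum]
    _ ≤ β / 2 * a q + K * (D ^ w * (β / (2 * (K * D ^ w)) * a q)) := by gcongr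
    _ = β * a q := by field_simp; ring

/-! ### Combining the residue classes -/

/-- **Bounded number of components in superexponential Gibbs partitions** (Equation (tos1)
in the proof of Theorem `te:need`): there exists `L ≥ 1` such that the total weight of
composite structures of size `n` with at least `L` components is negligible compared with
the total weight of those with fewer than `L` components. -/
theorem gibbs_bounded_components
    (a : ℕ → ℝ) (ha : ∀ i, 0 ≤ a i) (ha0 : a 0 = 0)
    (d : ℕ) (hd : 1 ≤ d)
    (hlattice : ∀ i, i % d ≠ 1 % d → a i = 0)
    (I : ℕ) (hI : ∀ i, I ≤ i → i % d = 1 % d → 0 < a i)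
    (hrad0 : ∀ t : ℝ, 0 < t → ¬ Summable (fun i => a i * t ^ i))
    (hgiant : ∀ k, 2 ≤ k → GiantPartAt a k)
    (f : ℕ → ℝ) (hf : ∀ ℓ, 0 ≤ f ℓ)
    (hfrad : ∃ t : ℝ, 0 < t ∧ Summable (fun ℓ => f ℓ * t ^ ℓ)) :
    ∃ L : ℕ, 1 ≤ L ∧ ∀ ε : ℝ, 0 < ε → ∃ N : ℕ, ∀ n, N ≤ n →
      (∑ ℓ ∈ Finset.Icc L n, f ℓ * c a ℓ n) ≤
        ε * (∑ ℓ ∈ Finset.Ico 1 L, f ℓ * c a ℓ n) := by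
  obtain ⟨t, ht, hft⟩ := hfrad
  have h2 := hgiant 2 le_rfl
  obtain ⟨J, m, hJ⟩ := tail_small a ha ha0 d hd hlattice (max I 2) (le_max_right _ _)
    (fun i hi => hI i ((le_max_left _ _).trans hi)) h2 f hf t ht hft
  -- in each residue class met by the support of `f`, pick one `ℓ ≥ 1` with `f ℓ > 0`
  have hex : ∀ r : ℕ, ∃ b : ℕ, (∃ ℓ, 1 ≤ ℓ ∧ 0 < f ℓ ∧ ℓ ≡ r [MOD d]) →
      1 ≤ b ∧ 0 < f b ∧ b ≡ r [MOD d] := fun r => by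
    by_cases h : ∃ ℓ, 1 ≤ ℓ ∧ 0 < f ℓ ∧ ℓ ≡ r [MOD d]
    · obtain ⟨ℓ, hℓ⟩ := h
      exact ⟨ℓ, fun _ => hℓ⟩
    · exact ⟨0, fun h' => absurd h' h⟩
  choose b hb using hex
  set B := ∑ r ∈ Finset.range d, b r with hB
  have hbB : ∀ r, r < d → b r ≤ B := fun r hr =>
    Finset.single_le_sum (f := b) (fun _ _ => Nat.zero_le _) (Finset.mem_range.2 hr)
  refine ⟨B * m + J + B + 1, by omega, fun ε hε => ?_⟩
  set L := B * m + J + B + 1 with hL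
  have hN : ∀ r : ℕ, ∃ N : ℕ, r < d → (∃ ℓ, 1 ≤ ℓ ∧ 0 < f ℓ ∧ ℓ ≡ r [MOD d]) →
      ∀ n, N ≤ n → n ≡ b r [MOD d] →
        ∑ ℓ ∈ Finset.Icc L n, f ℓ * c a ℓ n ≤ ε * (f (b r) * c a (b r) n) := fun r => by
    by_cases h : r < d ∧ ∃ ℓ, 1 ≤ ℓ ∧ 0 < f ℓ ∧ ℓ ≡ r [MOD d]
    · have hbr := hb r h.2
      obtain ⟨N, hN⟩ := hJ (b r) hbr.1 hbr.2.1 L (by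
        have := Nat.mul_le_mul_right m (hbB r h.1)
        omega) ε hε
      exact ⟨N, fun _ _ => hN⟩
    · exact ⟨0, fun h1 h3 => absurd ⟨h1, h3⟩ h⟩
  choose N hN using hN
  refine ⟨∑ r ∈ Finset.range d, N r, fun n hn => ?_⟩
  have hrd : n % d < d := Nat.mod_lt _ hd
  have hterm : ∀ ℓ, 0 ≤ f ℓ * c a ℓ n := fun ℓ => mul_nonneg (hf ℓ) (c_nonneg a ha ℓ n)
  by_cases h : ∃ ℓ, 1 ≤ ℓ ∧ 0 < f ℓ ∧ ℓ ≡ n % d [MOD d]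
  · have hbr := hb (n % d) h
    have hNn : N (n % d) ≤ n := (Finset.single_le_sum (f := N) (fun _ _ => Nat.zero_le _)
      (Finset.mem_range.2 hrd)).trans hn
    refine (hN (n % d) hrd h n hNn ((Nat.mod_modEq n d).symm.trans hbr.2.2.symm)).trans ?_
    refine mul_le_mul_of_nonneg_left ?_ hε.le
    refine Finset.single_le_sum (f := fun ℓ => f ℓ * c a ℓ n) (fun ℓ _ => hterm ℓ) ?_
    have := hbB _ hrd
    exact Finset.mem_Ico.2 ⟨hbr.1, by omega⟩
  · rw [Finset.sum_eq_zero]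
    · exact mul_nonneg hε.le (Finset.sum_nonneg fun ℓ _ => hterm ℓ)
    · intro ℓ hℓ
      have hℓ1 : 1 ≤ ℓ := by have := Finset.mem_Icc.1 hℓ; omega
      by_cases hmod : n ≡ ℓ [MOD d]
      · have : f ℓ = 0 := by
          by_contra hne
          exact h ⟨ℓ, hℓ1, (hf ℓ).lt_of_ne' hne, hmod.symm.trans (Nat.mod_modEq n d).symm⟩
        rw [this, zero_mul]
      · rw [c_eq_zero_of_lattice a d hlattice ℓ n hmod, mul_zero]

end Gibbs
end

section
/- Stability of the giant-part condition under division by the index (key step in the proof of Theorem te:discon for type III weights): Let (a(i))_{i≥0} be nonnegative reals with a(0) = 0 satisfying the giant-part condition at every k ≥ 2. Then the sequence b(i) := a(i)/i for i ≥ 1, b(0) := 0, also satisfies the giant-part condition at every k ≥ 2. -/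
/-!
Dividing by the index gains a factor of order `1 / n` on both sides of the giant-part inequality.
For a `k`-tuple `t` of positive integers with sum `n`, every entry is at most `∏ j, t j`, so
`n ≤ k * ∏ j, t j` (`sum_le_mul_prod`), that is, `∏ j, 1 / t j ≤ k / n ≤ k / (n - k + 1)`.
Hence the capped sum for `a i / i` is at most `k / (n - k + 1)` times the capped sum for `a`
(`cCap_div_index_le`), and the giant-part condition for `a` with `ε / k` gives the one for `a i / i`
with `ε`.
-/

open Finset
open scoped Classical

namespace Gibbs

theorem sum_le_mul_prod {k : ℕ} (t : Fin k → ℕ) (ht : ∀ j, 0 < t j) :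
    ∑ j, t j ≤ k * ∏ j, t j := by
  have h : ∀ j ∈ (Finset.univ : Finset (Fin k)), t j ≤ ∏ j, t j := fun j hj =>
    Nat.le_of_dvd (Finset.prod_pos fun i _ => ht i) (Finset.dvd_prod_of_mem t hj)
  simpa using Finset.sum_le_card_nsmul _ _ _ h

theorem cCap_div_index_le (a : ℕ → ℝ) (ha : ∀ i, 0 ≤ a i) {k n : ℕ} (hk : 1 ≤ k) (hn : 1 ≤ n)
    (m : ℕ) :
    cCap (fun i => a i / i) k n m ≤ (k : ℝ) / ((n - k + 1 : ℕ) : ℝ) * cCap a k n m := by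
  unfold cCap
  rw [Finset.mul_sum]
  refine Finset.sum_le_sum fun t ht => ?_
  rw [Finset.mem_filter, Finset.Nat.mem_antidiagonalTuple] at ht
  obtain ⟨hsum, hpos, -⟩ := ht
  have hP : 0 < ∏ j, t j := Finset.prod_pos fun j _ => hpos j
  have hle : n - k + 1 ≤ k * ∏ j, t j := by
    have := sum_le_mul_prod t hpos
    omega
  have hA : 0 ≤ ∏ j, a (t j) := Finset.prod_nonneg fun j _ => ha _
  have hP' : (0 : ℝ) < ∏ j, (t j : ℝ) := by exact_mod_cast hP
  have hle' : ((n - k + 1 : ℕ) : ℝ) ≤ k * ∏ j, (t j : ℝ) := by exact_mod_cast hle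
  have hm : (0 : ℝ) < ((n - k + 1 : ℕ) : ℝ) := by exact_mod_cast Nat.succ_pos _
  rw [Finset.prod_div_distrib, div_mul_eq_mul_div, div_le_div_iff₀ hP' hm]
  calc (∏ j, a (t j)) * ((n - k + 1 : ℕ) : ℝ)
      ≤ (∏ j, a (t j)) * (k * ∏ j, (t j : ℝ)) := mul_le_mul_of_nonneg_left hle' hA
    _ = k * (∏ j, a (t j)) * ∏ j, (t j : ℝ) := by ring

/-- **Stability of the giant-part condition under division by the index** (key step in the
proof of Theorem `te:discon` for type III weights): if `(a i)` is nonnegative with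
`a 0 = 0` and satisfies the giant-part condition at every `k ≥ 2`, then so does the
sequence `b i := a i / i` (with `b 0 = 0`). -/
theorem giantPart_div_index
    (a : ℕ → ℝ) (ha : ∀ i, 0 ≤ a i) (ha0 : a 0 = 0)
    (hgiant : ∀ k, 2 ≤ k → GiantPartAt a k) :
    ∀ k, 2 ≤ k → GiantPartAt (fun i => a i / i) k := by
  intro k hk ε hε
  have hk0 : (0 : ℝ) < k := by exact_mod_cast (by omega : 0 < k)
  obtain ⟨N, hN⟩ := hgiant k hk (ε / k) (div_pos hε hk0)
  refine ⟨max N 1, fun n hn => ?_⟩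
  have hm : (0 : ℝ) < ((n - k + 1 : ℕ) : ℝ) := by exact_mod_cast Nat.succ_pos _
  calc cCap (fun i => a i / i) k n (n - k)
      ≤ (k : ℝ) / ((n - k + 1 : ℕ) : ℝ) * cCap a k n (n - k) :=
        cCap_div_index_le a ha (by omega) (le_of_max_le_right hn) _
    _ ≤ (k : ℝ) / ((n - k + 1 : ℕ) : ℝ) * (ε / k * a (n - k + 1)) :=
        mul_le_mul_of_nonneg_left (hN n (le_of_max_le_left hn)) (div_pos hk0 hm).le
    _ = ε * (a (n - k + 1) / ((n - k + 1 : ℕ) : ℝ)) := by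
        field_simp

end Gibbs
end

section
/- Successive-ratio consequence of the two-part giant-part condition (Equation (two) in the proof of Theorem te:need): Let (a(i))_{i≥0} be nonnegative reals such that for every ε > 0 there is M with ∑_{j=2}^{m−2} a(j)·a(m−j) ≤ ε·a(m−1) for all m ≥ M. Then for every integer i ≥ 1 with a(i+1) > 0 and every ε > 0 there is M' such that a(m−i) ≤ ε·a(m) for all m ≥ M'. -/
open Finset

/-- **Successive-ratio consequence of the two-part giant-part condition** (Equation (two)
in the proof of Theorem `te:need`): if `(a i)` is a nonnegative sequence with
`∑_{j=2}^{m-2} a j · a (m-j) = o(a (m-1))`, then for every `i ≥ 1` with `a (i+1) > 0`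
one has `a (m - i) = o(a m)` as `m → ∞`. -/
theorem successive_ratio_of_convolution
    (a : ℕ → ℝ) (ha : ∀ i, 0 ≤ a i)
    (h : ∀ ε : ℝ, 0 < ε → ∃ M : ℕ, ∀ m, M ≤ m →
      (∑ j ∈ Finset.Icc 2 (m - 2), a j * a (m - j)) ≤ ε * a (m - 1)) :
    ∀ i, 1 ≤ i → 0 < a (i + 1) →
      ∀ ε : ℝ, 0 < ε → ∃ M' : ℕ, ∀ m, M' ≤ m → a (m - i) ≤ ε * a m := by
  intro i hi hpos ε hε
  obtain ⟨M, hM⟩ := h (ε * a (i + 1)) (mul_pos hε hpos)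
  refine ⟨M + i + 2, fun m hm => ?_⟩
  -- At index `m + 1`, the summand `j = i + 1` is `a (i + 1) * a (m - i)`.
  have hsum := hM (m + 1) (by omega)
  have hterm : a (i + 1) * a (m + 1 - (i + 1)) ≤
      ∑ j ∈ Finset.Icc 2 (m + 1 - 2), a j * a (m + 1 - j) :=
    Finset.single_le_sum (f := fun j => a j * a (m + 1 - j))
      (fun j _ => mul_nonneg (ha _) (ha _)) (Finset.mem_Icc.mpr (by omega))
  rw [Nat.add_sub_add_right] at hterm
  rw [Nat.add_sub_cancel] at hsum
  refine le_of_mul_le_mul_left ?_ hpos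
  linarith
end

section
/- Agreement of types under the Ehrenborg–Méndez transformation (analytic content of Lemma le:types): Let (q_k)_{k≥2} be nonnegative reals with q_k > 0 for at least one k. For t ≥ 0 set p(t) := ∑_{k≥2} q_k t^k ∈ [0,∞] and ρ_p := sup{t ≥ 0 : p(t) < ∞}; assume ρ_p > 0. Since t ↦ p(t)/t is nondecreasing on (0,∞) and tends to 0 as t → 0⁺, the set {t ∈ (0,ρ_p) : p(t) < t} is a nonempty initial interval; let ρ_* denote its supremum. For 0 < t < ρ_* write p'(t) := ∑_{k≥2} k·q_k·t^{k−1} (a finite sum) and ψ(t) := (t·p'(t) − p(t))/(t − p(t)), which is well-defined since p(t) < t for such t. Then: (i) sup_{0<t<ρ_p} p'(t) ≥ 1 if and only if sup_{0<t<ρ_*} ψ(t) ≥ 1; (ii) if sup_{0<t<ρ_p} p'(t) < 1 then p(t) < t for every t ∈ (0,ρ_p), so ρ_* = ρ_p; (iii) for t ∈ (0,ρ_*), ψ(t) = 1 if and only if p'(t) = 1. -/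
/-!
Write `p = P q` and `p' = P' q`. As `q 0 = q 1 = 0`, comparing coefficients gives
`2 p(t) ≤ t p'(t)` (`two_mul_P_le`) and `p(l t) ≤ l² p(t)` for `l ≤ 1` (`P_mul_le`); the latter
shows that `{t > 0 : p(t) < t}` is a nonempty initial interval (`P_lt_of_le`, `rhoStar_pos`).

Where `p(t) < t`, clearing the denominator in `ψ` shows `ψ(t) = 1 ↔ p'(t) = 1`
(`psi_eq_one_iff`), and `ψ(t) ≤ p'(t)` as soon as `p'(t) ≤ 1` (`psi_le_P'`). Conversely
`ψ(t) ≤ c < 1` means `t p' ≤ c t + (1 - c) p`, so `2 p ≤ t p'` improves this to the uniform bound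
`p'(t) ≤ 2c / (1 + c) < 1` (`P'_le_of_psi_le`).

If `sup p' < 1`, then `p(t) ≤ t p'(t) < t` on all of `(0, ρ_p)`, so `ρ_* = ρ_p` and
`sup ψ ≤ sup p' < 1`. If `sup ψ < 1`, then `p' ≤ 2c / (1 + c)` on `(0, ρ_*)`, so there
`p(t) ≤ t / 2`. Since `p` is continuous inside its interval of convergence, this forces
`ρ_* = ρ_p` (`rhoStar_eq_of_half`): otherwise `p(ρ_*) ≤ ρ_* / 2 < ρ_*`, and `p(t) < t` would
persist beyond `ρ_*`. Hence `sup p' < 1`.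
-/

open scoped ENNReal NNReal

namespace SchroederTypes

/-- `P q t = ∑_{k} q_k t^k ∈ [0,∞]`, the generating series of the weights `q`
(here `q 0 = q 1 = 0`, so effectively `∑_{k ≥ 2} q_k t^k`). -/
noncomputable def P (q : ℕ → ℝ≥0) (t : ℝ≥0) : ℝ≥0∞ :=
  ∑' k : ℕ, (q k : ℝ≥0∞) * (t : ℝ≥0∞) ^ k

/-- `P' q t = ∑_k k · q_k · t^(k-1) ∈ [0,∞]`, the derivative series. -/
noncomputable def P' (q : ℕ → ℝ≥0) (t : ℝ≥0) : ℝ≥0∞ :=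
  ∑' k : ℕ, (k : ℝ≥0∞) * (q k : ℝ≥0∞) * (t : ℝ≥0∞) ^ (k - 1)

/-- `ρ_p`, the radius of convergence of `p`: the supremum of the nonnegative reals `t`
with `p(t) < ∞`, as an extended nonnegative real. -/
noncomputable def rhoP (q : ℕ → ℝ≥0) : ℝ≥0∞ :=
  sSup {x : ℝ≥0∞ | ∃ t : ℝ≥0, x = (t : ℝ≥0∞) ∧ P q t < ⊤}

/-- `ρ_*`, the supremum of the (nonempty initial) set `{t ∈ (0, ρ_p) : p(t) < t}`. -/
noncomputable def rhoStar (q : ℕ → ℝ≥0) : ℝ≥0∞ :=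
  sSup {x : ℝ≥0∞ | ∃ t : ℝ≥0, x = (t : ℝ≥0∞) ∧ 0 < t ∧ (t : ℝ≥0∞) < rhoP q ∧
    P q t < (t : ℝ≥0∞)}

/-- `ψ(t) = (t·p'(t) − p(t)) / (t − p(t))`, the logarithmic-derivative functional of the
series `φ(t) = 1/(1 − p(t)/t)` of the associated enriched trees (for `t ∈ (0, ρ_*)` the
subtraction and division are the usual real ones, since there `p(t) < t < ∞`). -/
noncomputable def psi (q : ℕ → ℝ≥0) (t : ℝ≥0) : ℝ≥0∞ :=
  ((t : ℝ≥0∞) * P' q t - P q t) / ((t : ℝ≥0∞) - P q t)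

open scoped Topology

lemma le_iSup_bounded (f : ℝ≥0 → ℝ≥0∞) {r : ℝ≥0∞} {t : ℝ≥0} (ht : 0 < t)
    (htr : (t : ℝ≥0∞) < r) :
    f t ≤ ⨆ (t : ℝ≥0) (_ : 0 < t) (_ : (t : ℝ≥0∞) < r), f t :=
  le_trans (le_iSup (fun _ : (t : ℝ≥0∞) < r => f t) htr)
    (le_iSup₂ (f := fun (t : ℝ≥0) (_ : 0 < t) => ⨆ _ : (t : ℝ≥0∞) < r, f t) t ht)

lemma P_mono (q : ℕ → ℝ≥0) {s t : ℝ≥0} (h : s ≤ t) : P q s ≤ P q t := by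
  unfold P
  gcongr

lemma two_mul_P_le (q : ℕ → ℝ≥0) (hq0 : q 0 = 0) (hq1 : q 1 = 0) (t : ℝ≥0) :
    2 * P q t ≤ t * P' q t := by
  unfold P P'
  rw [← ENNReal.tsum_mul_left, ← ENNReal.tsum_mul_left]
  refine ENNReal.tsum_le_tsum fun k => ?_
  rcases k with _ | _ | k
  · simp [hq0]
  · simp [hq1]
  · have h : (2 : ℝ≥0∞) ≤ ((k + 1 + 1 : ℕ) : ℝ≥0∞) := by
      exact_mod_cast (by omega : 2 ≤ k + 1 + 1)
    calc (2 : ℝ≥0∞) * ((q (k + 1 + 1) : ℝ≥0∞) * (t : ℝ≥0∞) ^ (k + 1 + 1))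
        ≤ ((k + 1 + 1 : ℕ) : ℝ≥0∞) * ((q (k + 1 + 1) : ℝ≥0∞) * (t : ℝ≥0∞) ^ (k + 1 + 1)) := by
          gcongr
      _ = _ := by
          rw [Nat.add_sub_cancel, pow_succ (t : ℝ≥0∞) (k + 1)]
          ring

lemma P_le_mul_P' (q : ℕ → ℝ≥0) (hq0 : q 0 = 0) (hq1 : q 1 = 0) (t : ℝ≥0) :
    P q t ≤ t * P' q t := by
  refine le_trans ?_ (two_mul_P_le q hq0 hq1 t)
  rw [two_mul]
  exact le_self_add

/-- Quadratic scaling of `p`: all its exponents are at least `2`. -/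
lemma P_mul_le (q : ℕ → ℝ≥0) (hq0 : q 0 = 0) (hq1 : q 1 = 0) (l t : ℝ≥0) (hl : l ≤ 1) :
    P q (l * t) ≤ (l : ℝ≥0∞) ^ 2 * P q t := by
  unfold P
  rw [← ENNReal.tsum_mul_left]
  refine ENNReal.tsum_le_tsum fun k => ?_
  rcases k with _ | _ | k
  · simp [hq0]
  · simp [hq1]
  · have h : (l : ℝ≥0∞) ^ (k + 1 + 1) ≤ (l : ℝ≥0∞) ^ 2 := by
      exact_mod_cast pow_le_pow_of_le_one zero_le hl (by omega : 2 ≤ k + 1 + 1)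
    push_cast
    rw [mul_pow]
    calc (q (k + 1 + 1) : ℝ≥0∞) * ((l : ℝ≥0∞) ^ (k + 1 + 1) * (t : ℝ≥0∞) ^ (k + 1 + 1))
        ≤ (q (k + 1 + 1) : ℝ≥0∞) * ((l : ℝ≥0∞) ^ 2 * (t : ℝ≥0∞) ^ (k + 1 + 1)) := by gcongr
      _ = _ := by ring

/-- The set `{t > 0 : p(t) < t}` is closed downwards, because `p(t) / t` is nondecreasing. -/
lemma P_lt_of_le (q : ℕ → ℝ≥0) (hq0 : q 0 = 0) (hq1 : q 1 = 0) {s t : ℝ≥0} (ht : 0 < t)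
    (hts : t ≤ s) (hs : P q s < s) : P q t < t := by
  have hs0 : 0 < s := ht.trans_le hts
  have hl : t / s ≤ 1 := div_le_one_of_le₀ hts zero_le
  have h := P_mul_le q hq0 hq1 (t / s) s hl
  rw [div_mul_cancel₀ _ hs0.ne'] at h
  refine h.trans_lt ?_
  lift P q s to ℝ≥0 using hs.ne_top with b
  have hb : b < s := by exact_mod_cast hs
  have hlp : 0 < t / s := by positivity
  have : (t / s) ^ 2 * b < t := by
    calc (t / s) ^ 2 * b ≤ (t / s) * b := by
          gcongr
          exact pow_le_of_le_one zero_le hl two_ne_zero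
      _ < (t / s) * s := by gcongr
      _ = t := div_mul_cancel₀ _ hs0.ne'
  exact_mod_cast this

lemma P_lt_of_lt_rhoStar (q : ℕ → ℝ≥0) (hq0 : q 0 = 0) (hq1 : q 1 = 0) {t : ℝ≥0} (ht : 0 < t)
    (h : (t : ℝ≥0∞) < rhoStar q) : P q t < t := by
  obtain ⟨_, ⟨s, rfl, _, _, hs⟩, hts⟩ := lt_sSup_iff.1 h
  exact P_lt_of_le q hq0 hq1 ht (by exact_mod_cast hts.le) hs

lemma P_lt_top (q : ℕ → ℝ≥0) {t : ℝ≥0} (h : (t : ℝ≥0∞) < rhoP q) : P q t < ⊤ := by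
  obtain ⟨_, ⟨s, rfl, hs⟩, hts⟩ := lt_sSup_iff.1 h
  exact (P_mono q (by exact_mod_cast hts.le)).trans_lt hs

lemma rhoStar_le (q : ℕ → ℝ≥0) : rhoStar q ≤ rhoP q := by
  refine sSup_le ?_
  rintro _ ⟨t, rfl, _, h, _⟩
  exact h.le

lemma le_rhoStar (q : ℕ → ℝ≥0) {t : ℝ≥0} (ht : 0 < t) (h : (t : ℝ≥0∞) < rhoP q)
    (hp : P q t < t) : (t : ℝ≥0∞) ≤ rhoStar q :=
  le_sSup ⟨t, rfl, ht, h, hp⟩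

lemma rhoStar_pos (q : ℕ → ℝ≥0) (hq0 : q 0 = 0) (hq1 : q 1 = 0) (hrad : 0 < rhoP q) :
    0 < rhoStar q := by
  obtain ⟨s, hs0, hs⟩ := ENNReal.lt_iff_exists_nnreal_btwn.1 hrad
  have hs0 : 0 < s := by exact_mod_cast hs0
  have hfin := P_lt_top q hs
  obtain ⟨b, hb⟩ : ∃ b : ℝ≥0, (b : ℝ≥0∞) = P q s := ⟨_, ENNReal.coe_toNNReal hfin.ne⟩
  -- with `l = s / (s + b + 1)`, the point `l s` satisfies `p(l s) ≤ l² b < l s`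
  have hden : 0 < s + b + 1 := by positivity
  have hl0 : 0 < s / (s + b + 1) := by positivity
  have hl : s / (s + b + 1) ≤ 1 := by
    rw [div_le_one hden, add_assoc]
    exact le_self_add
  have h := P_mul_le q hq0 hq1 (s / (s + b + 1)) s hl
  rw [← hb] at h
  have hlb : s / (s + b + 1) * b < s := by
    rw [div_mul_eq_mul_div, div_lt_iff₀ hden]
    have : b < s + b + 1 := by
      calc b ≤ s + b := le_add_self
        _ < s + b + 1 := lt_add_one _
    gcongr
  have hlt : P q (s / (s + b + 1) * s) < ((s / (s + b + 1) * s : ℝ≥0) : ℝ≥0∞) := by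
    refine h.trans_lt ?_
    have : (s / (s + b + 1)) ^ 2 * b < s / (s + b + 1) * s := by
      rw [sq, mul_assoc]
      gcongr
    exact_mod_cast this
  have hpos : 0 < s / (s + b + 1) * s := by positivity
  have hlt' : ((s / (s + b + 1) * s : ℝ≥0) : ℝ≥0∞) < rhoP q := by
    refine lt_of_le_of_lt ?_ hs
    exact_mod_cast mul_le_of_le_one_left zero_le hl
  refine lt_of_lt_of_le ?_ (le_rhoStar q hpos hlt' hlt)
  exact_mod_cast hpos

lemma continuousOn_P (q : ℕ → ℝ≥0) {s : ℝ≥0} (hs : P q s < ⊤) :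
    ContinuousOn (fun t : ℝ≥0 => (P q t).toReal) (Set.Iic s) := by
  have key : ∀ t : ℝ≥0, (P q t).toReal = ∑' k : ℕ, (q k : ℝ) * (t : ℝ) ^ k := by
    intro t
    unfold P
    rw [ENNReal.tsum_toReal_eq fun k => by finiteness]
    simp
  simp_rw [key]
  have hsum : Summable fun k : ℕ => (q k : ℝ) * (s : ℝ) ^ k := by
    have := ENNReal.summable_toReal hs.ne
    simpa using this
  refine continuousOn_tsum (fun k => by fun_prop) hsum ?_
  intro k t ht
  have ht' : (t : ℝ) ≤ s := by exact_mod_cast ht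
  rw [Real.norm_of_nonneg (by positivity)]
  gcongr

/-- If `p(t) ≤ t / 2` throughout `(0, ρ_*)`, then `p` never crosses the diagonal. -/
lemma rhoStar_eq_of_half (q : ℕ → ℝ≥0) (hq0 : q 0 = 0) (hq1 : q 1 = 0) (hrad : 0 < rhoP q)
    (h : ∀ t : ℝ≥0, 0 < t → (t : ℝ≥0∞) < rhoStar q → 2 * P q t ≤ t) :
    rhoStar q = rhoP q := by
  by_contra hne
  have hlt : rhoStar q < rhoP q := lt_of_le_of_ne (rhoStar_le q) hne
  have hpos := rhoStar_pos q hq0 hq1 hrad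
  obtain ⟨r, hr⟩ : ∃ r : ℝ≥0, (r : ℝ≥0∞) = rhoStar q := ⟨_, ENNReal.coe_toNNReal hlt.ne_top⟩
  rw [← hr] at hlt hpos h
  have hr0 : 0 < r := by exact_mod_cast hpos
  obtain ⟨s, hrs, hs⟩ := ENNReal.lt_iff_exists_nnreal_btwn.1 hlt
  have hrs : r < s := by exact_mod_cast hrs
  have hc : ContinuousAt (fun t : ℝ≥0 => (P q t).toReal) r :=
    (continuousOn_P q (P_lt_top q hs)).continuousAt (Iic_mem_nhds hrs)
  have hcoe : ContinuousAt (fun t : ℝ≥0 => (t : ℝ)) r := by fun_prop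
  have hle : 2 * (P q r).toReal ≤ r := by
    have : (𝓝[<] r).NeBot := nhdsLT_neBot_of_exists_lt ⟨0, hr0⟩
    refine le_of_tendsto_of_tendsto (b := 𝓝[<] r) ((hc.const_mul 2).tendsto.mono_left nhdsWithin_le_nhds)
      (hcoe.tendsto.mono_left nhdsWithin_le_nhds) ?_
    filter_upwards [Ioo_mem_nhdsLT hr0] with t ht
    have := ENNReal.toReal_mono (by finiteness) (h t ht.1 (by exact_mod_cast ht.2))
    simpa using this
  have hr0' : (0 : ℝ) < r := by exact_mod_cast hr0
  have hlt' : (P q r).toReal < (r : ℝ) := by linarith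
  have hev : ∀ᶠ t in 𝓝[>] r, (P q t).toReal < (t : ℝ) :=
    (hc.eventually_lt hcoe hlt').filter_mono nhdsWithin_le_nhds
  have : (𝓝[>] r).NeBot := nhdsGT_neBot_of_exists_gt ⟨s, hrs⟩
  obtain ⟨t, ht, hrt, hts⟩ := (hev.and (Ioo_mem_nhdsGT hrs)).exists
  have htP : (t : ℝ≥0∞) < rhoP q := lt_trans (by exact_mod_cast hts) hs
  have hPt : P q t < t := by
    rw [← ENNReal.toReal_lt_toReal (P_lt_top q htP).ne ENNReal.coe_ne_top]
    simpa using ht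
  have := le_rhoStar q (hr0.trans hrt) htP hPt
  rw [← hr] at this
  exact absurd hrt (not_lt.2 (by exact_mod_cast this))

lemma psi_le_P' (q : ℕ → ℝ≥0) {t : ℝ≥0} (h1 : P' q t ≤ 1) :
    psi q t ≤ P' q t := by
  unfold psi
  refine ENNReal.div_le_of_le_mul ?_
  rw [ENNReal.mul_sub fun _ _ => (h1.trans_lt ENNReal.one_lt_top).ne, mul_comm (P' q t)]
  exact tsub_le_tsub_left (mul_le_of_le_one_left zero_le h1) _

lemma psi_eq_one_iff (q : ℕ → ℝ≥0) (hq0 : q 0 = 0) (hq1 : q 1 = 0) {t : ℝ≥0} (ht : 0 < t)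
    (hP : P q t < t) : psi q t = 1 ↔ P' q t = 1 := by
  have ht' : (t : ℝ≥0∞) ≠ 0 := by exact_mod_cast ht.ne'
  unfold psi
  rw [ENNReal.div_eq_one_iff (tsub_pos_of_lt hP).ne' (by finiteness)]
  constructor
  · intro h
    have h2 : (t : ℝ≥0∞) * P' q t = t := by
      rw [← tsub_add_cancel_of_le (P_le_mul_P' q hq0 hq1 t), h, tsub_add_cancel_of_le hP.le]
    refine (ENNReal.mul_right_inj ht' ENNReal.coe_ne_top).1 ?_
    rw [h2, mul_one]
  · intro h
    rw [h, mul_one]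

/-- The uniform converse of `psi_le_P'`: the inequality `2 p(t) ≤ t p'(t)` keeps `p'` away from
`1` as long as `ψ` stays away from `1`. -/
lemma P'_le_of_psi_le (q : ℕ → ℝ≥0) (hq0 : q 0 = 0) (hq1 : q 1 = 0) {t c : ℝ≥0} (ht : 0 < t)
    (hP : P q t < t) (hc : c < 1) (h : psi q t ≤ c) :
    P' q t ≤ ((2 * c / (1 + c) : ℝ≥0) : ℝ≥0∞) := by
  have ht' : (t : ℝ≥0∞) ≠ 0 := by exact_mod_cast ht.ne'
  have h2 := two_mul_P_le q hq0 hq1 t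
  unfold psi at h
  rw [ENNReal.div_le_iff (tsub_pos_of_lt hP).ne' (by finiteness), tsub_le_iff_right] at h
  have hfin : P' q t ≠ ⊤ := by
    intro htop
    rw [htop, ENNReal.mul_top ht'] at h
    exact absurd h (not_le.2 (by finiteness))
  lift P' q t to ℝ≥0 using hfin with d
  lift P q t to ℝ≥0 using hP.ne_top with b
  have hb : b < t := by exact_mod_cast hP
  have h : t * d ≤ c * (t - b) + b := by exact_mod_cast h
  have h2 : 2 * b ≤ t * d := by exact_mod_cast h2
  suffices d ≤ 2 * c / (1 + c) by exact_mod_cast this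
  rw [le_div_iff₀ (by positivity)]
  rw [← NNReal.coe_le_coe] at h h2 ⊢
  push_cast [NNReal.coe_sub hb.le] at h h2 ⊢
  have hc' : (c : ℝ) < 1 := by exact_mod_cast hc
  have ht0 : (0 : ℝ) < t := by exact_mod_cast ht
  refine le_of_mul_le_mul_left ?_ ht0
  nlinarith [mul_le_mul_of_nonneg_left h2 (sub_nonneg.2 hc'.le)]

/-- **Agreement of types under the Ehrenborg–Méndez transformation** (analytic content of
Lemma `le:types`): for nonnegative weights `(q_k)_{k ≥ 2}` (so `q 0 = q 1 = 0`) with some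
`q_k > 0` and `ρ_p > 0`:
(i) `sup_{0 < t < ρ_p} p'(t) ≥ 1` iff `sup_{0 < t < ρ_*} ψ(t) ≥ 1`;
(ii) if `sup_{0 < t < ρ_p} p'(t) < 1` then `p(t) < t` for every `t ∈ (0, ρ_p)`, so
`ρ_* = ρ_p`;
(iii) for `t ∈ (0, ρ_*)`, `ψ(t) = 1` iff `p'(t) = 1`. -/
theorem types_agree (q : ℕ → ℝ≥0) (hq0 : q 0 = 0) (hq1 : q 1 = 0)
    (hex : ∃ k, 2 ≤ k ∧ 0 < q k) (hrad : 0 < rhoP q) :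
    ((1 ≤ ⨆ (t : ℝ≥0) (_ : 0 < t) (_ : (t : ℝ≥0∞) < rhoP q), P' q t) ↔
      (1 ≤ ⨆ (t : ℝ≥0) (_ : 0 < t) (_ : (t : ℝ≥0∞) < rhoStar q), psi q t)) ∧
    ((⨆ (t : ℝ≥0) (_ : 0 < t) (_ : (t : ℝ≥0∞) < rhoP q), P' q t) < 1 →
      (∀ t : ℝ≥0, 0 < t → (t : ℝ≥0∞) < rhoP q → P q t < (t : ℝ≥0∞)) ∧
      rhoStar q = rhoP q) ∧
    (∀ t : ℝ≥0, 0 < t → (t : ℝ≥0∞) < rhoStar q → (psi q t = 1 ↔ P' q t = 1)) := by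
  have part2 : (⨆ (t : ℝ≥0) (_ : 0 < t) (_ : (t : ℝ≥0∞) < rhoP q), P' q t) < 1 →
      (∀ t : ℝ≥0, 0 < t → (t : ℝ≥0∞) < rhoP q → P q t < (t : ℝ≥0∞)) ∧
      rhoStar q = rhoP q := by
    intro hsup
    have hlt : ∀ t : ℝ≥0, 0 < t → (t : ℝ≥0∞) < rhoP q → P q t < (t : ℝ≥0∞) := by
      intro t ht htr
      have h1 : P' q t < 1 := (le_iSup_bounded _ ht htr).trans_lt hsup
      have ht' : (t : ℝ≥0∞) ≠ 0 := by exact_mod_cast ht.ne'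
      calc P q t ≤ t * P' q t := P_le_mul_P' q hq0 hq1 t
        _ < t * 1 := ENNReal.mul_lt_mul_right ht' ENNReal.coe_ne_top h1
        _ = t := mul_one _
    refine ⟨hlt, le_antisymm (rhoStar_le q) (le_of_forall_lt fun x hx => ?_)⟩
    obtain ⟨t, hxt, htr⟩ := ENNReal.lt_iff_exists_nnreal_btwn.1 hx
    have ht : 0 < t := by exact_mod_cast (zero_le (a := x)).trans_lt hxt
    exact hxt.trans_le (le_rhoStar q ht htr (hlt t ht htr))
  refine ⟨⟨?_, ?_⟩, part2, fun t ht htr =>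
    psi_eq_one_iff q hq0 hq1 ht (P_lt_of_lt_rhoStar q hq0 hq1 ht htr)⟩
  · contrapose!
    intro hsup
    obtain ⟨c, hc, hc1⟩ := ENNReal.lt_iff_exists_nnreal_btwn.1 hsup
    have hc1 : c < 1 := by exact_mod_cast hc1
    have hbd : ∀ t : ℝ≥0, 0 < t → (t : ℝ≥0∞) < rhoStar q →
        P' q t ≤ ((2 * c / (1 + c) : ℝ≥0) : ℝ≥0∞) := fun t ht htr =>
      P'_le_of_psi_le q hq0 hq1 ht (P_lt_of_lt_rhoStar q hq0 hq1 ht htr) hc1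
        ((le_iSup_bounded _ ht htr).trans hc.le)
    have hd : 2 * c / (1 + c) < 1 := by
      rw [div_lt_one (by positivity), two_mul]
      gcongr
    have hd' : ((2 * c / (1 + c) : ℝ≥0) : ℝ≥0∞) < 1 := by exact_mod_cast hd
    have heq : rhoStar q = rhoP q := by
      refine rhoStar_eq_of_half q hq0 hq1 hrad fun t ht htr => ?_
      exact (two_mul_P_le q hq0 hq1 t).trans
        (mul_le_of_le_one_right zero_le ((hbd t ht htr).trans hd'.le))
    rw [← heq]
    exact (iSup_le fun t => iSup_le fun ht => iSup_le fun htr => hbd t ht htr).trans_lt hd'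
  · contrapose!
    intro hsup
    obtain ⟨_, heq⟩ := part2 hsup
    rw [heq]
    refine lt_of_le_of_lt ?_ hsup
    gcongr with t ht htr
    refine psi_le_P' q (le_trans ?_ hsup.le)
    exact le_iSup_bounded _ ht htr

end SchroederTypes
end
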